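/- Let Ω ⊂ ℂⁿ be a bounded domain and let ξ ∈ ∂Ω be a Dini-smooth boundary point. Then there exists a neighbourhood U of ξ such that for all p, q ∈ Ω ∩ U, the Kobayashi distance satisfies K_Ω(p,q) ≤ log(1 + 2|p−q| / √(δ_Ω(p) δ_Ω(q))). -/

import Mathlib

open Metric Set MeasureTheory Filter Topology

noncomputable section

variable {E : Type*} [NormedAddCommGroup E] [NormedSpace ℂ E]

/-- Distance from `x` to the boundary of `D`. -/
def bdist (D : Set E) (x : E) : ℝ := Metric.infDist x (frontier D)

/-- Distance from `x` to the boundary of `D` along the complex line `x + ℂ v`. -/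
def bdistDir (D : Set E) (x v : E) : ℝ :=
  Metric.infDist x (frontier D ∩ {w | ∃ c : ℂ, w = x + c • v})

/-- The infinitesimal Kobayashi (pseudo-)metric of `D ⊆ E`. -/
def kobMetric (D : Set E) (x v : E) : ℝ :=
  sInf { r : ℝ | ∃ (f : ℂ → E) (ξ : ℂ),
    DifferentiableOn ℂ f (ball (0:ℂ) 1) ∧ MapsTo f (ball (0:ℂ) 1) D ∧
    f 0 = x ∧ ξ • derivWithin f (ball (0:ℂ) 1) 0 = v ∧ r = ‖ξ‖ }

/-- `σ` is absolutely continuous on `[a,b]`, with a.e. derivative `g`. -/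
def IsACWithDeriv (σ g : ℝ → E) (a b : ℝ) : Prop :=
  IntervalIntegrable g volume a b ∧
  ∀ t ∈ Icc a b, σ t = σ a + ∫ s in a..t, g s

/-- The Kobayashi pseudo-distance of `D`, defined via lengths of absolutely
continuous curves (Venturini's description). -/
def kobDist (D : Set E) (x y : E) : ℝ :=
  sInf { r : ℝ | ∃ (a b : ℝ) (σ g : ℝ → E), a ≤ b ∧
    IsACWithDeriv σ g a b ∧ MapsTo σ (Icc a b) D ∧ σ a = x ∧ σ b = y ∧
    r = ∫ t in a..b, kobMetric D (σ t) (g t) }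

/-- Log-type convex domain, with explicit constants `C, ν > 0`. -/
def LogTypeConvexWith (D : Set E) (C ν : ℝ) : Prop :=
  IsOpen D ∧ D.Nonempty ∧ Bornology.IsBounded D ∧ Convex ℝ D ∧ 0 < C ∧ 0 < ν ∧
  ∀ z ∈ D, ∀ v : E, v ≠ 0 →
    bdistDir D z v ≤ C / |Real.log (bdist D z)| ^ (1 + ν)

/-- Log-type convex domain. -/
def LogTypeConvex (D : Set E) : Prop := ∃ C ν : ℝ, LogTypeConvexWith D C ν

/-- A `ℂ`-convex set: every nonempty intersection with a complex affine line is
connected and simply connected. -/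
def CConvex (D : Set E) : Prop :=
  ∀ z v : E, v ≠ 0 → (D ∩ {w | ∃ c : ℂ, w = z + c • v}).Nonempty →
    IsConnected (D ∩ {w | ∃ c : ℂ, w = z + c • v}) ∧
    SimplyConnectedSpace ↥(D ∩ {w | ∃ c : ℂ, w = z + c • v})

/-- Log-type `ℂ`-convex domain. -/
def LogTypeCConvex (D : Set E) : Prop :=
  IsOpen D ∧ D.Nonempty ∧ Bornology.IsBounded D ∧ CConvex D ∧
  ∃ C ν : ℝ, 0 < C ∧ 0 < ν ∧
    ∀ z ∈ D, ∀ v : E, v ≠ 0 →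
      bdistDir D z v ≤ C / |Real.log (bdist D z)| ^ (1 + ν)

/-- `σ : [a,b] → D` (with a.e. derivative `g`) is a `(λ,κ)`-almost geodesic for the
Kobayashi distance of `D`. -/
def AlmostGeodesicOn (D : Set E) (lam kap : ℝ) (σ g : ℝ → E) (a b : ℝ) : Prop :=
  MapsTo σ (Icc a b) D ∧ IsACWithDeriv σ g a b ∧
  (∀ s ∈ Icc a b, ∀ t ∈ Icc a b,
    (1 / lam) * |t - s| - kap ≤ kobDist D (σ s) (σ t) ∧
    kobDist D (σ s) (σ t) ≤ lam * |t - s| + kap) ∧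
  (∀ᵐ t ∂volume, t ∈ Icc a b → kobMetric D (σ t) (g t) ≤ lam)

/-- `σ : [a,b] → D` is a `C`-rough geodesic for the Kobayashi distance of `D`. -/
def RoughGeodesicOn (D : Set E) (C : ℝ) (σ : ℝ → E) (a b : ℝ) : Prop :=
  MapsTo σ (Icc a b) D ∧
  ∀ s ∈ Icc a b, ∀ t ∈ Icc a b,
    |t - s| - C ≤ kobDist D (σ s) (σ t) ∧ kobDist D (σ s) (σ t) ≤ |t - s| + C

/-- `ρ` is a `C¹` local defining function for `D` near `ξ` on the open set `W`. -/
def IsLocalDefiningFn (D : Set E) (ξ : E) (W : Set E) (ρ : E → ℝ) : Prop :=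
  IsOpen W ∧ ξ ∈ W ∧ ContDiffOn ℝ 1 ρ W ∧ (∀ x ∈ W, fderiv ℝ ρ x ≠ 0) ∧
  D ∩ W = {x ∈ W | ρ x < 0} ∧ frontier D ∩ W = {x ∈ W | ρ x = 0}

/-- `ξ` is a Dini-smooth boundary point of `D`: the boundary is `C¹` near `ξ` and the
unit normal admits a modulus of continuity `ω` satisfying the Dini condition. -/
def DiniSmoothBoundaryPoint (D : Set E) (ξ : E) : Prop :=
  ∃ (W : Set E) (ρ : E → ℝ) (ω : ℝ → ℝ),
    IsLocalDefiningFn D ξ W ρ ∧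
    (∀ t ∈ Icc (0:ℝ) 1, 0 ≤ ω t) ∧ MonotoneOn ω (Icc (0:ℝ) 1) ∧
    IntegrableOn (fun t => ω t / t) (Ioc (0:ℝ) 1) ∧
    ∀ x ∈ frontier D ∩ W, ∀ y ∈ frontier D ∩ W, ‖x - y‖ ≤ 1 →
      ‖(‖fderiv ℝ ρ x‖)⁻¹ • fderiv ℝ ρ x - (‖fderiv ℝ ρ y‖)⁻¹ • fderiv ℝ ρ y‖ ≤ ω ‖x - y‖

/-- `D` has `C^{1,ε}` boundary: near every boundary point there is a `C¹` defining
function whose differential is `ε`-Hölder. -/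
def HolderC1Boundary (D : Set E) (ε : ℝ) : Prop :=
  ∀ ξ ∈ frontier D, ∃ (W : Set E) (ρ : E → ℝ) (M : ℝ), 0 < M ∧
    IsLocalDefiningFn D ξ W ρ ∧
    ∀ x ∈ W, ∀ y ∈ W, ‖fderiv ℝ ρ x - fderiv ℝ ρ y‖ ≤ M * ‖x - y‖ ^ ε

/-- The complex affine tangent hyperplane of `∂D` at `x`, computed from a local
defining function `ρ`. -/
def complexTangentHyperplane (ρ : E → ℝ) (x : E) : Set E :=
  {w : E | fderiv ℝ ρ x (w - x) = 0 ∧ fderiv ℝ ρ x ((Complex.I : ℂ) • (w - x)) = 0}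

/-- The Gromov product of `x` and `y` with respect to the base point `o`, for the
Kobayashi distance of `D`. -/
def gromovProd (D : Set E) (o x y : E) : ℝ :=
  (kobDist D x o + kobDist D o y - kobDist D x y) / 2

end

/-!
Near a Dini-smooth boundary point, `p` and `q` are joined by climbing from each along its inner
normal to a height `H` comparable to the larger of `|p - q|` and their distances to the boundary,
and then crossing on the segment between the two raised points.

Climbing: if `ω` is the modulus of continuity of the normal, then `Ω` contains, translated to each
boundary foot point, the cusp-like region `ω(|w|) |w| < Re w`. The Dini condition makes
`u(ζ) = ∫ ω(t) ζ / (t (t + ζ)) dt` a small bounded holomorphic function on the right half-plane,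
and `ζ ↦ ζ (1 - 25 u(ζ))` maps a disc tangent to the imaginary axis at `0` into that region while
being almost an isometry near `0`. So climbing from height `δ` to `H` costs at most
`log (H / δ) / 2` plus a small constant, as in a half-space.

Crossing: at height `H` the domain contains a large half-ball whose flat face lies at distance
almost `H`, so by comparison with a half-space the crossing costs only a little more than half of
`|p - q| / H`. The sum of the three costs stays below `log (1 + 2 |p - q| / √(δ(p) δ(q)))`. If
`|p - q|` is at most a third of the larger boundary distance, a single segment suffices.
-/

section KobayashiMetric

variable {E : Type*} [NormedAddCommGroup E] [NormedSpace ℂ E] {D : Set E} {x v : E}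

lemma kobMetric_nonneg (D : Set E) (x v : E) : 0 ≤ kobMetric D x v := by
  apply Real.sInf_nonneg
  rintro _ ⟨_, _, -, -, -, -, rfl⟩
  exact norm_nonneg _

lemma kobMetric_le_of_disc {f : ℂ → E} {f' : E} {c : ℂ}
    (hf : DifferentiableOn ℂ f (ball 0 1)) (hfD : MapsTo f (ball 0 1) D) (hf0 : f 0 = x)
    (hf' : HasDerivAt f f' 0) (hv : c • f' = v) : kobMetric D x v ≤ ‖c‖ := by
  refine csInf_le ⟨0, ?_⟩ ⟨f, c, hf, hfD, hf0, ?_, rfl⟩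
  · rintro _ ⟨_, _, -, -, -, -, rfl⟩
    exact norm_nonneg _
  · rw [derivWithin_of_isOpen isOpen_ball (by simp), hf'.deriv, hv]

lemma kobMetric_neg (D : Set E) (x v : E) : kobMetric D x (-v) = kobMetric D x v := by
  unfold kobMetric
  congr 1 with r
  constructor <;>
  · rintro ⟨f, c, hf, hfD, hf0, hv, hr⟩
    exact ⟨f, -c, hf, hfD, hf0, by simp [hv], by rw [norm_neg, hr]⟩

end KobayashiMetric

section AbsolutelyContinuousCurves

variable {E : Type*} [NormedAddCommGroup E] [NormedSpace ℂ E] {σ τ g k : ℝ → E} {a b c : ℝ}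

namespace IsACWithDeriv

lemma sub_eq_integral (h : IsACWithDeriv σ g a b) {s t : ℝ} (hs : s ∈ Icc a b)
    (ht : t ∈ Icc a b) : σ t - σ s = ∫ u in s..t, g u := by
  have hint : ∀ {r}, r ∈ Icc a b → IntervalIntegrable g volume a r := fun hr =>
    h.1.mono_set (uIcc_subset_uIcc_left (Icc_subset_uIcc hr))
  rw [h.2 t ht, h.2 s hs, add_sub_add_left_eq_sub,
    intervalIntegral.integral_interval_sub_left (hint ht) (hint hs)]

lemma comp_sub_left (h : IsACWithDeriv σ g a b) (hab : a ≤ b) (c : ℝ) :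
    IsACWithDeriv (fun t => σ (c - t)) (fun t => -g (c - t)) (c - b) (c - a) := by
  refine ⟨(h.1.comp_sub_left c).symm.neg, fun t ht => ?_⟩
  have hct : c - t ∈ Icc a b := ⟨by linarith [ht.2], by linarith [ht.1]⟩
  simp only [intervalIntegral.integral_neg, intervalIntegral.integral_comp_sub_left,
    sub_sub_cancel, ← h.sub_eq_integral hct (right_mem_Icc.2 hab), neg_sub, add_sub_cancel]

lemma comp_sub_right (h : IsACWithDeriv σ g a b) (c : ℝ) :
    IsACWithDeriv (fun t => σ (t - c)) (fun t => g (t - c)) (a + c) (b + c) := by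
  refine ⟨h.1.comp_sub_right c, fun t ht => ?_⟩
  simp only [intervalIntegral.integral_comp_sub_right, add_sub_cancel_right]
  exact h.2 (t - c) ⟨by linarith [ht.1], by linarith [ht.2]⟩

lemma congr (h : IsACWithDeriv σ g a b) (hab : a ≤ b) (hσ : EqOn σ τ (Icc a b))
    (hg : EqOn g k (Ioc a b)) : IsACWithDeriv τ k a b := by
  refine ⟨h.1.congr (by rwa [uIoc_of_le hab]), fun t ht => ?_⟩
  rw [← hσ ht, ← hσ (left_mem_Icc.2 hab), h.2 t ht]
  congr 1
  refine intervalIntegral.integral_congr_ae (.of_forall fun s hs => hg ?_)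
  rw [uIoc_of_le ht.1] at hs
  exact ⟨hs.1, hs.2.trans ht.2⟩

lemma append (h₁ : IsACWithDeriv σ g a b) (h₂ : IsACWithDeriv σ g b c) (hab : a ≤ b) :
    IsACWithDeriv σ g a c := by
  refine ⟨h₁.1.trans h₂.1, fun t ht => ?_⟩
  rcases le_total t b with htb | hbt
  · exact h₁.2 t ⟨ht.1, htb⟩
  · rw [h₂.2 t ⟨hbt, ht.2⟩, h₁.2 b ⟨hab, le_rfl⟩, add_assoc,
      intervalIntegral.integral_add_adjacent_intervals h₁.1]
    exact h₂.1.mono_set (uIcc_subset_uIcc_left (Icc_subset_uIcc ⟨hbt, ht.2⟩))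

lemma of_hasDerivAt [CompleteSpace E] (hab : a ≤ b)
    (hσ : ∀ t ∈ Icc a b, HasDerivAt σ (g t) t) (hg : ContinuousOn g (Icc a b)) :
    IsACWithDeriv σ g a b := by
  refine ⟨hg.intervalIntegrable_of_Icc hab, fun t ht => ?_⟩
  rw [intervalIntegral.integral_eq_sub_of_hasDerivAt (f := σ), add_sub_cancel]
  · rw [uIcc_of_le ht.1]
    exact fun s hs => hσ s ⟨hs.1, hs.2.trans ht.2⟩
  · exact (hg.mono (Icc_subset_Icc_right ht.2)).intervalIntegrable_of_Icc ht.1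

end IsACWithDeriv

end AbsolutelyContinuousCurves

section KobayashiLength

variable {E : Type*} [NormedAddCommGroup E] [NormedSpace ℂ E] {D : Set E}

/-- `σ`, with a.e. derivative `g`, is an absolutely continuous curve in `D` on `[a, b]` whose
Kobayashi speed is at most `B`. Lengths are estimated through the integrable majorant `B`, which
avoids any question of measurability of `t ↦ kobMetric D (σ t) (g t)`. -/
structure HasKobSpeedLE (D : Set E) (σ g : ℝ → E) (B : ℝ → ℝ) (a b : ℝ) : Prop where
  le : a ≤ b
  isAC : IsACWithDeriv σ g a b
  mapsTo : MapsTo σ (Icc a b) D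
  intervalIntegrable : IntervalIntegrable B volume a b
  kobMetric_le : ∀ t ∈ Icc a b, kobMetric D (σ t) (g t) ≤ B t

namespace HasKobSpeedLE

variable {σ τ g k : ℝ → E} {B C : ℝ → ℝ} {a b c : ℝ}

lemma kobDist_le (h : HasKobSpeedLE D σ g B a b) :
    kobDist D (σ a) (σ b) ≤ ∫ t in a..b, B t := by
  calc kobDist D (σ a) (σ b) ≤ ∫ t in a..b, kobMetric D (σ t) (g t) := by
        refine csInf_le ⟨0, ?_⟩ ⟨a, b, σ, g, h.le, h.isAC, h.mapsTo, rfl, rfl, rfl⟩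
        rintro _ ⟨a, b, σ, g, hab, -, -, -, -, rfl⟩
        exact intervalIntegral.integral_nonneg hab fun t _ => kobMetric_nonneg _ _ _
    _ ≤ ∫ t in a..b, B t := by
        rw [intervalIntegral.integral_of_le h.le, intervalIntegral.integral_of_le h.le]
        refine integral_mono_of_nonneg (.of_forall fun t => kobMetric_nonneg _ _ _)
          h.intervalIntegrable.1 ?_
        exact (ae_restrict_iff' measurableSet_Ioc).2
          (.of_forall fun t ht => h.kobMetric_le t (Ioc_subset_Icc_self ht))

lemma comp_sub_left (h : HasKobSpeedLE D σ g B a b) (c : ℝ) :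
    HasKobSpeedLE D (fun t => σ (c - t)) (fun t => -g (c - t)) (fun t => B (c - t))
      (c - b) (c - a) := by
  have hmem : ∀ t ∈ Icc (c - b) (c - a), c - t ∈ Icc a b := fun t ht =>
    ⟨by linarith [ht.2], by linarith [ht.1]⟩
  exact ⟨sub_le_sub_left h.le c, h.isAC.comp_sub_left h.le c, fun t ht => h.mapsTo (hmem t ht),
    (h.intervalIntegrable.comp_sub_left c).symm, fun t ht =>
      (kobMetric_neg D _ _).trans_le (h.kobMetric_le _ (hmem t ht))⟩

lemma comp_sub_right (h : HasKobSpeedLE D σ g B a b) (c : ℝ) :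
    HasKobSpeedLE D (fun t => σ (t - c)) (fun t => g (t - c)) (fun t => B (t - c))
      (a + c) (b + c) := by
  have hmem : ∀ t ∈ Icc (a + c) (b + c), t - c ∈ Icc a b := fun t ht =>
    ⟨by linarith [ht.1], by linarith [ht.2]⟩
  exact ⟨add_le_add_left h.le c, h.isAC.comp_sub_right c, fun t ht => h.mapsTo (hmem t ht),
    h.intervalIntegrable.comp_sub_right c, fun t ht => h.kobMetric_le _ (hmem t ht)⟩

lemma append (h₁ : HasKobSpeedLE D σ g B a b) (h₂ : HasKobSpeedLE D τ k C b c)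
    (hστ : σ b = τ b) :
    HasKobSpeedLE D (fun t => if t ≤ b then σ t else τ t) (fun t => if t ≤ b then g t else k t)
      (fun t => if t ≤ b then B t else C t) a c := by
  refine ⟨h₁.le.trans h₂.le, ?_, fun t ht => ?_, ?_, fun t ht => ?_⟩
  · refine (h₁.isAC.congr h₁.le ?_ ?_).append (h₂.isAC.congr h₂.le ?_ ?_) h₁.le
    · exact fun t ht => (if_pos ht.2).symm
    · exact fun t ht => (if_pos ht.2).symm
    · rintro t ht
      rcases ht.1.eq_or_lt with rfl | hbt
      · simp [hστ]
      · simp [hbt.not_ge]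
    · exact fun t ht => (if_neg ht.1.not_ge).symm
  · by_cases htb : t ≤ b
    · simpa [htb] using h₁.mapsTo ⟨ht.1, htb⟩
    · simpa [htb] using h₂.mapsTo ⟨(not_le.1 htb).le, ht.2⟩
  · refine (h₁.intervalIntegrable.congr ?_).trans (h₂.intervalIntegrable.congr ?_)
    · rw [uIoc_of_le h₁.le]
      exact fun t ht => (if_pos ht.2).symm
    · rw [uIoc_of_le h₂.le]
      exact fun t ht => (if_neg ht.1.not_ge).symm
  · by_cases htb : t ≤ b
    · simpa [htb] using h₁.kobMetric_le t ⟨ht.1, htb⟩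
    · simpa [htb] using h₂.kobMetric_le t ⟨(not_le.1 htb).le, ht.2⟩

end HasKobSpeedLE

lemma intervalIntegral_ite_le {B C : ℝ → ℝ} {a b c : ℝ} (hab : a ≤ b) (hbc : b ≤ c)
    (hB : IntervalIntegrable B volume a b) (hC : IntervalIntegrable C volume b c) :
    ∫ t in a..c, (if t ≤ b then B t else C t) = (∫ t in a..b, B t) + ∫ t in b..c, C t := by
  have hB' : EqOn B (fun t => if t ≤ b then B t else C t) (uIoc a b) := by
    rw [uIoc_of_le hab]
    exact fun t ht => (if_pos ht.2).symm
  have hC' : EqOn C (fun t => if t ≤ b then B t else C t) (uIoc b c) := by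
    rw [uIoc_of_le hbc]
    exact fun t ht => (if_neg ht.1.not_ge).symm
  rw [← intervalIntegral.integral_add_adjacent_intervals (hB.congr hB') (hC.congr hC'),
    intervalIntegral.integral_congr_ae (.of_forall fun t ht => (hB' ht).symm),
    intervalIntegral.integral_congr_ae (.of_forall fun t ht => (hC' ht).symm)]

/-- `x` and `y` are joined in `D` by an absolutely continuous curve of Kobayashi length at
most `L`. -/
def KobJoined (D : Set E) (x y : E) (L : ℝ) : Prop :=
  ∃ (a b : ℝ) (σ g : ℝ → E) (B : ℝ → ℝ),
    HasKobSpeedLE D σ g B a b ∧ σ a = x ∧ σ b = y ∧ ∫ t in a..b, B t ≤ L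

namespace KobJoined

variable {x y z : E} {L L' : ℝ}

lemma mono (h : KobJoined D x y L) (hL : L ≤ L') : KobJoined D x y L' := by
  obtain ⟨a, b, σ, g, B, hσ, hx, hy, hB⟩ := h
  exact ⟨a, b, σ, g, B, hσ, hx, hy, hB.trans hL⟩

lemma kobDist_le (h : KobJoined D x y L) : kobDist D x y ≤ L := by
  obtain ⟨a, b, σ, g, B, hσ, rfl, rfl, hB⟩ := h
  exact hσ.kobDist_le.trans hB

lemma symm (h : KobJoined D x y L) : KobJoined D y x L := by
  obtain ⟨a, b, σ, g, B, hσ, rfl, rfl, hB⟩ := h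
  exact ⟨_, _, _, _, _, hσ.comp_sub_left 0, by simp, by simp, by simpa using hB⟩

lemma trans (h : KobJoined D x y L) (h' : KobJoined D y z L') : KobJoined D x z (L + L') := by
  obtain ⟨a, b, σ, g, B, hσ, rfl, hy, hB⟩ := h
  obtain ⟨a', c, τ, k, C, hτ, rfl, rfl, hC⟩ := h'
  have hτ' := hτ.comp_sub_right (b - a')
  rw [add_sub_cancel] at hτ'
  refine ⟨_, _, _, _, _, hσ.append hτ' (by simp [hy]), by simp [hσ.le], ?_, ?_⟩
  · rcases hτ'.le.eq_or_lt with hbc | hbc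
    · have hca : c = a' := by linarith
      simp [hca, hy]
    · simp [hbc.not_ge]
  · rw [intervalIntegral_ite_le hσ.le hτ'.le hσ.intervalIntegrable hτ'.intervalIntegrable,
      intervalIntegral.integral_comp_sub_right, sub_sub_cancel, add_sub_cancel_right]
    exact add_le_add hB hC

lemma of_hasDerivAt [CompleteSpace E] {a b : ℝ} (hab : a ≤ b) {σ g : ℝ → E} {B : ℝ → ℝ}
    (hσ : ∀ t ∈ Icc a b, HasDerivAt σ (g t) t) (hg : ContinuousOn g (Icc a b))
    (hB : ContinuousOn B (Icc a b)) (hσD : MapsTo σ (Icc a b) D)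
    (hgB : ∀ t ∈ Icc a b, kobMetric D (σ t) (g t) ≤ B t) :
    KobJoined D (σ a) (σ b) (∫ t in a..b, B t) :=
  ⟨a, b, σ, g, B, ⟨hab, .of_hasDerivAt hab hσ hg, hσD, hB.intervalIntegrable_of_Icc hab, hgB⟩,
    rfl, rfl, le_rfl⟩

lemma of_segment [CompleteSpace E] {B : ℝ → ℝ} (hB : ContinuousOn B (Icc 0 1))
    (hD : ∀ t ∈ Icc (0 : ℝ) 1, x + t • (y - x) ∈ D)
    (hxy : ∀ t ∈ Icc (0 : ℝ) 1, kobMetric D (x + t • (y - x)) (y - x) ≤ B t) :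
    KobJoined D x y (∫ t in (0 : ℝ)..1, B t) := by
  have hσ : ∀ t ∈ Icc (0 : ℝ) 1, HasDerivAt (fun t : ℝ => x + t • (y - x)) (y - x) t :=
    fun t _ => by
    simpa using ((hasDerivAt_id t).smul_const (y - x)).const_add x
  simpa using of_hasDerivAt zero_le_one hσ continuousOn_const hB hD hxy

end KobJoined

end KobayashiLength

section Discs

/-- The biholomorphism from the unit disc onto the disc `ball R R` which sends `0` to `s`; it is
used to estimate the Kobayashi metric along the diameter of `ball R R` ending at its boundary
point `0`. -/
noncomputable def tangentDiscMap (R s : ℝ) (z : ℂ) : ℂ := R * s * (1 + z) / (R - (R - s) * z)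

variable {R s : ℝ} {z : ℂ}

lemma tangentDiscMap_zero (hR : R ≠ 0) : tangentDiscMap R s 0 = s := by
  have hR' : (R : ℂ) ≠ 0 := by exact_mod_cast hR
  simp [tangentDiscMap, mul_div_cancel_left₀ _ hR']

lemma norm_mul_sub_lt_norm_sub_mul {a b : ℝ} (hb : 0 ≤ b) (hba : b < a) (hz : ‖z‖ < 1) :
    ‖a * z - b‖ < ‖a - b * z‖ := by
  refine lt_of_pow_lt_pow_left₀ 2 (norm_nonneg _) ?_
  have hz' : Complex.normSq z < 1 := by
    rw [Complex.normSq_eq_norm_sq]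
    exact pow_lt_one₀ (norm_nonneg z) hz two_ne_zero
  have hba' : 0 < a ^ 2 - b ^ 2 := by nlinarith
  simp only [← Complex.normSq_eq_norm_sq, Complex.normSq_apply, Complex.sub_re, Complex.sub_im,
    Complex.re_ofReal_mul, Complex.im_ofReal_mul, Complex.ofReal_re, Complex.ofReal_im] at hz' ⊢
  nlinarith [mul_pos hba' (sub_pos.2 hz')]

lemma tangentDiscMap_denom_ne_zero (hs : 0 < s) (hsR : s ≤ R) (hz : ‖z‖ < 1) :
    (R - (R - s) * z : ℂ) ≠ 0 := by
  have h := norm_mul_sub_lt_norm_sub_mul (sub_nonneg.2 hsR) (sub_lt_self R hs) hz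
  rw [Complex.ofReal_sub] at h
  exact norm_pos_iff.1 ((norm_nonneg _).trans_lt h)

lemma norm_tangentDiscMap_sub_lt (hs : 0 < s) (hsR : s ≤ R) (hz : ‖z‖ < 1) :
    ‖tangentDiscMap R s z - R‖ < R := by
  have hR : 0 < R := hs.trans_le hsR
  have hne := tangentDiscMap_denom_ne_zero hs hsR hz
  have heq : tangentDiscMap R s z - R = R * ((R * z - (R - s)) / (R - (R - s) * z)) := by
    rw [tangentDiscMap, div_sub' hne, mul_div_assoc']
    ring
  have h := norm_mul_sub_lt_norm_sub_mul (sub_nonneg.2 hsR) (sub_lt_self R hs) hz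
  rw [Complex.ofReal_sub] at h
  rw [heq, norm_mul, norm_div, Complex.norm_of_nonneg hR.le]
  exact mul_lt_of_lt_one_right hR ((div_lt_one (norm_pos_iff.2 hne)).2 h)

lemma mapsTo_tangentDiscMap (hs : 0 < s) (hsR : s ≤ R) :
    MapsTo (tangentDiscMap R s) (ball 0 1) (ball (R : ℂ) R) := fun _ hz =>
  mem_ball_iff_norm.2 (norm_tangentDiscMap_sub_lt hs hsR (mem_ball_zero_iff.1 hz))

lemma differentiableOn_tangentDiscMap (hs : 0 < s) (hsR : s ≤ R) :
    DifferentiableOn ℂ (tangentDiscMap R s) (ball 0 1) := by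
  have hnum : Differentiable ℂ fun z : ℂ => R * s * (1 + z) := by fun_prop
  have hden : Differentiable ℂ fun z : ℂ => R - (R - s) * z := by fun_prop
  exact hnum.differentiableOn.div hden.differentiableOn fun z hz =>
    tangentDiscMap_denom_ne_zero hs hsR (mem_ball_zero_iff.1 hz)

lemma hasDerivAt_tangentDiscMap_zero (hR : R ≠ 0) :
    HasDerivAt (tangentDiscMap R s) ((s * (2 - s / R) : ℝ) : ℂ) 0 := by
  have hR' : (R : ℂ) ≠ 0 := by exact_mod_cast hR
  have hnum := ((hasDerivAt_id (0 : ℂ)).const_add 1).const_mul (R * s : ℂ)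
  have hden := ((hasDerivAt_id (0 : ℂ)).const_mul (R - s : ℂ)).const_sub (R : ℂ)
  refine (hnum.div hden (by simpa using hR')).congr_deriv ?_
  push_cast
  simp only [id, mul_zero, add_zero, sub_zero, mul_one]
  field_simp
  ring

variable {E : Type*} [NormedAddCommGroup E] [NormedSpace ℂ E] {D : Set E} {x v : E}

lemma kobMetric_le_norm_div_of_ball_subset {r : ℝ} (hr : 0 < r) (hD : ball x r ⊆ D) :
    kobMetric D x v ≤ ‖v‖ / r := by
  set w : E := (r / ‖v‖ : ℂ) • v with hw
  have hwr : ‖w‖ ≤ r := by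
    rw [hw, norm_smul, norm_div, Complex.norm_of_nonneg hr.le, Complex.norm_real, norm_norm,
      div_mul_eq_mul_div, mul_div_assoc]
    exact mul_le_of_le_one_right hr.le (div_self_le_one _)
  have hf : ∀ z : ℂ, HasDerivAt (fun z : ℂ => x + z • w) ((1 : ℂ) • w) z := fun z =>
    ((hasDerivAt_id z).smul_const w).const_add x
  have hfD : MapsTo (fun z : ℂ => x + z • w) (ball 0 1) D := fun z hz => hD <| by
    rw [mem_ball_iff_norm, add_sub_cancel_left, norm_smul]
    nlinarith [mem_ball_zero_iff.1 hz, norm_nonneg z]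
  have h := kobMetric_le_of_disc (x := x) (v := v) (c := (‖v‖ / r : ℝ))
    (fun z _ => (hf z).differentiableAt.differentiableWithinAt) hfD
    (by rw [zero_smul, add_zero]) (hf 0) ?_
  · rwa [Complex.norm_of_nonneg (by positivity)] at h
  · rcases eq_or_ne v 0 with rfl | hv
    · simp
    · have hv' : (‖v‖ : ℂ) ≠ 0 := by exact_mod_cast norm_ne_zero_iff.2 hv
      have hr' : (r : ℂ) ≠ 0 := by exact_mod_cast hr.ne'
      rw [one_smul, hw, smul_smul, Complex.ofReal_div, div_mul_div_cancel₀ hr', div_self hv',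
        one_smul]

lemma kobMetric_le_of_differentiableOn_ball {G : ℂ → E} {G' : E} (hs : 0 < s) (hsR : s ≤ R)
    (hG : DifferentiableOn ℂ G (ball (R : ℂ) R)) (hGD : MapsTo G (ball (R : ℂ) R) D)
    (hG' : HasDerivAt G G' s) : kobMetric D (G s) G' ≤ (s * (2 - s / R))⁻¹ := by
  have hR : 0 < R := hs.trans_le hsR
  have hsR' : s / R ≤ 1 := (div_le_one hR).2 hsR
  have hpos : 0 < s * (2 - s / R) := mul_pos hs (by linarith)
  have h0 := tangentDiscMap_zero (s := s) hR.ne'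
  rw [← h0] at hG'
  have h := kobMetric_le_of_disc (D := D) (x := G s) (v := G')
    (c := ((s * (2 - s / R))⁻¹ : ℝ))
    (hG.comp (differentiableOn_tangentDiscMap hs hsR) (mapsTo_tangentDiscMap hs hsR))
    (hGD.comp (mapsTo_tangentDiscMap hs hsR)) (by simp [h0])
    (hG'.scomp (0 : ℂ) (hasDerivAt_tangentDiscMap_zero hR.ne'))
    (by rw [smul_smul, ← Complex.ofReal_mul, inv_mul_cancel₀ hpos.ne', Complex.ofReal_one,
      one_smul])
  rwa [Complex.norm_of_nonneg (inv_pos.2 hpos).le] at h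

lemma inv_mul_two_sub_div_le (hs : 0 < s) (hsR : s ≤ R) :
    (s * (2 - s / R))⁻¹ ≤ 2⁻¹ * s⁻¹ + (2 * R)⁻¹ := by
  have hR : 0 < R := hs.trans_le hsR
  have h2 : 0 < 2 * R - s := by linarith
  calc (s * (2 - s / R))⁻¹ = 2⁻¹ * s⁻¹ + (2 * (2 * R - s))⁻¹ := by field_simp; ring
    _ ≤ 2⁻¹ * s⁻¹ + (2 * R)⁻¹ := by gcongr; linarith

lemma kobJoined_of_differentiableOn_ball [CompleteSpace E] {G : ℂ → E} {s₀ s₁ : ℝ}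
    (hG : DifferentiableOn ℂ G (ball (R : ℂ) R)) (hGD : MapsTo G (ball (R : ℂ) R) D)
    (hs₀ : 0 < s₀) (hs : s₀ ≤ s₁) (hs₁ : s₁ ≤ R) :
    KobJoined D (G s₀) (G s₁) (2⁻¹ * Real.log (s₁ / s₀) + (s₁ - s₀) / (2 * R)) := by
  have hmem : ∀ t ∈ Icc s₀ s₁, (t : ℂ) ∈ ball (R : ℂ) R := fun t ht => by
    rw [mem_ball_iff_norm, ← Complex.ofReal_sub, Complex.norm_real, Real.norm_eq_abs, abs_lt]
    exact ⟨by linarith [ht.1], by linarith [ht.2]⟩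
  have hG' : ∀ t ∈ Icc s₀ s₁, HasDerivAt G (deriv G t) t := fun t ht =>
    (hG.differentiableAt (isOpen_ball.mem_nhds (hmem t ht))).hasDerivAt
  have hpos : ∀ t ∈ Icc s₀ s₁, 0 < t := fun t ht => hs₀.trans_le ht.1
  have hinv : ContinuousOn (fun t : ℝ => t⁻¹) (Icc s₀ s₁) :=
    continuousOn_inv₀.mono fun t ht => (hpos t ht).ne'
  have hlen : ∫ t in s₀..s₁, (2⁻¹ * t⁻¹ + (2 * R)⁻¹) =
      2⁻¹ * Real.log (s₁ / s₀) + (s₁ - s₀) / (2 * R) := by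
    rw [intervalIntegral.integral_add
        ((hinv.intervalIntegrable_of_Icc hs).const_mul _) intervalIntegrable_const,
      intervalIntegral.integral_const_mul, integral_inv_of_pos hs₀ (hs₀.trans_le hs),
      intervalIntegral.integral_const, smul_eq_mul, div_eq_mul_inv (s₁ - s₀)]
  rw [← hlen]
  refine KobJoined.of_hasDerivAt (σ := fun t : ℝ => G t) hs
    (fun t ht => by
      simpa [Function.comp_def] using (hG' t ht).scomp t Complex.ofRealCLM.hasDerivAt)
    ?_ ?_ (fun t ht => hGD (hmem t ht)) fun t ht => ?_
  · exact (hG.deriv isOpen_ball).continuousOn.comp Complex.continuous_ofReal.continuousOn hmem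
  · exact (hinv.const_smul (2⁻¹ : ℝ)).add continuousOn_const
  · have htR : t ≤ R := ht.2.trans hs₁
    exact (kobMetric_le_of_differentiableOn_ball (hpos t ht) htR hG hGD (hG' t ht)).trans
      (inv_mul_two_sub_div_le (hpos t ht) htR)

end Discs

section HalfBall

variable {E : Type*} [NormedAddCommGroup E] [InnerProductSpace ℂ E]

attribute [local instance] InnerProductSpace.complexToReal

open scoped InnerProductSpace

lemma exists_eq_norm_smul_add_orthogonal {n : E} (hn : ‖n‖ = 1) (v : E) :
    ∃ (c : ℂ) (τ : E), ‖c‖ ≤ 1 ∧ ‖τ‖ ≤ 1 ∧ ⟪n, τ⟫_ℂ = 0 ∧ v = (‖v‖ : ℂ) • (c • n + τ) := by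
  have hnn : ⟪n, n⟫_ℂ = 1 := by rw [inner_self_eq_norm_sq_to_K, hn]; simp
  obtain ⟨u, hu⟩ : ∃ u : E, u = (‖v‖ : ℂ)⁻¹ • v := ⟨_, rfl⟩
  have hu1 : ‖u‖ ≤ 1 := by
    rw [hu, norm_smul, norm_inv, Complex.norm_real, norm_norm]
    exact inv_mul_le_one
  have hnτ : ⟪n, u - ⟪n, u⟫_ℂ • n⟫_ℂ = 0 := by
    rw [inner_sub_right, inner_smul_right, hnn, mul_one, sub_self]
  refine ⟨⟪n, u⟫_ℂ, u - ⟪n, u⟫_ℂ • n, ?_, ?_, hnτ, ?_⟩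
  · simpa [hn] using (norm_inner_le_norm (𝕜 := ℂ) n u).trans (by rw [hn, one_mul]; exact hu1)
  · have hpyth := norm_add_sq_eq_norm_sq_add_norm_sq_of_inner_eq_zero (𝕜 := ℂ)
      (⟪n, u⟫_ℂ • n) (u - ⟪n, u⟫_ℂ • n) (by rw [inner_smul_left, hnτ, mul_zero])
    rw [add_sub_cancel] at hpyth
    nlinarith [norm_nonneg (⟪n, u⟫_ℂ • n), norm_nonneg (u - ⟪n, u⟫_ℂ • n), norm_nonneg u]
  · rw [add_sub_cancel, hu, smul_smul]
    rcases eq_or_ne v 0 with rfl | hv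
    · simp
    · rw [mul_inv_cancel₀ (by exact_mod_cast norm_ne_zero_iff.2 hv), one_smul]

variable {D : Set E} {x n : E} {R s : ℝ}

lemma mapsTo_of_halfBall_subset (hs : 0 < s) (hsR : s ≤ R) (hn : ‖n‖ = 1)
    (hD : ∀ w : E, ‖w‖ < 3 * R → -s < ⟪n, w⟫_ℝ → x + w ∈ D) {c : ℂ} {τ : E} (hc : ‖c‖ ≤ 1)
    (hτ : ‖τ‖ ≤ s * (2 - s / R)) (hnτ : ⟪n, τ⟫_ℂ = 0) :
    MapsTo (fun z : ℂ => x + ((tangentDiscMap R s (c * z) - s) • n + z • τ)) (ball 0 1) D := by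
  intro z hz
  have hR : 0 < R := hs.trans_le hsR
  have hz : ‖z‖ < 1 := mem_ball_zero_iff.1 hz
  have hcz : ‖c * z‖ < 1 := by
    rw [norm_mul]
    exact mul_lt_one_of_nonneg_of_lt_one_right hc (norm_nonneg z) hz
  have hM := norm_tangentDiscMap_sub_lt hs hsR hcz
  set M := tangentDiscMap R s (c * z)
  have hMs : ‖M - s‖ < 2 * R - s := by
    have hRs : ‖(R - s : ℂ)‖ = R - s := by
      rw [← Complex.ofReal_sub, Complex.norm_of_nonneg (sub_nonneg.2 hsR)]
    linarith [norm_sub_le_norm_sub_add_norm_sub M R (s : ℂ)]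
  have hzτ : ‖z • τ‖ ≤ 2 * s := by
    have : s * (s / R) ≥ 0 := by positivity
    rw [norm_smul]
    nlinarith [norm_nonneg z, norm_nonneg τ]
  apply hD
  · have h := norm_add_le ((M - s) • n) (z • τ)
    rw [norm_smul, hn, mul_one] at h
    linarith
  · have hnn : ⟪n, n⟫_ℂ = 1 := by rw [inner_self_eq_norm_sq_to_K, hn]; simp
    have hre := (abs_lt.1 ((Complex.abs_re_le_norm (M - R)).trans_lt hM)).1
    change -s < (⟪n, (M - s) • n + z • τ⟫_ℂ).re
    rw [inner_add_right, inner_smul_right, inner_smul_right, hnn, hnτ]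
    simp only [mul_one, mul_zero, add_zero, Complex.sub_re, Complex.ofReal_re] at hre ⊢
    linarith

lemma kobMetric_le_norm_div_of_halfBall_subset (hs : 0 < s) (hsR : s ≤ R) (hn : ‖n‖ = 1)
    (hD : ∀ w : E, ‖w‖ < 3 * R → -s < ⟪n, w⟫_ℝ → x + w ∈ D) (v : E) :
    kobMetric D x v ≤ ‖v‖ / (s * (2 - s / R)) := by
  obtain ⟨c, τ, hc, hτ, hnτ, hv⟩ := exists_eq_norm_smul_add_orthogonal hn v
  have hR : 0 < R := hs.trans_le hsR
  have hsR' : s / R ≤ 1 := (div_le_one hR).2 hsR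
  set μ : ℝ := s * (2 - s / R) with hμ
  have hμ0 : 0 < μ := mul_pos hs (by linarith)
  have hμ0' : (μ : ℂ) ≠ 0 := by exact_mod_cast hμ0.ne'
  have hμτ : ‖(μ : ℂ) • τ‖ ≤ μ := by
    rw [norm_smul, Complex.norm_of_nonneg hμ0.le]
    exact mul_le_of_le_one_right hμ0.le hτ
  have hcz : MapsTo (c * ·) (ball (0 : ℂ) 1) (ball 0 1) := fun z hz => by
    rw [mem_ball_zero_iff] at hz ⊢
    rw [norm_mul]
    exact mul_lt_one_of_nonneg_of_lt_one_right hc (norm_nonneg z) hz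
  have hφ : HasDerivAt (fun z => tangentDiscMap R s (c * z)) (μ * c : ℂ) 0 := by
    have h := hasDerivAt_tangentDiscMap_zero (s := s) hR.ne'
    rw [← mul_zero c] at h
    simpa [Function.comp_def, hμ] using
      h.comp 0 ((hasDerivAt_id (0 : ℂ)).const_mul c)
  have h := kobMetric_le_of_disc (x := x) (v := v) (c := (‖v‖ / μ : ℝ))
    (f := fun z => x + ((tangentDiscMap R s (c * z) - s) • n + z • (μ : ℂ) • τ))
    (((((differentiableOn_tangentDiscMap hs hsR).comp (by fun_prop) hcz).sub_const _).smul_const n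
      |>.add (differentiableOn_id.smul_const _)).const_add x)
    (mapsTo_of_halfBall_subset hs hsR hn hD hc hμτ (by rw [inner_smul_right, hnτ, mul_zero]))
    (by simp [tangentDiscMap_zero hR.ne'])
    ((((hφ.sub_const _).smul_const n).add ((hasDerivAt_id 0).smul_const _)).const_add x) ?_
  · rwa [Complex.norm_of_nonneg (by positivity)] at h
  · have hvμ : ((‖v‖ / μ : ℝ) : ℂ) * μ = ‖v‖ := by
      rw [Complex.ofReal_div, div_mul_cancel₀ _ hμ0']
    rw [one_smul, mul_smul, ← smul_add, smul_smul, hvμ, ← hv]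

end HalfBall

section DiniMap

/-- A Dini modulus of continuity on `[0, A]`: a nonnegative increasing function `ω` for which
`ω t / t` is integrable. Neither continuity nor `ω 0 = 0` is required. -/
structure IsDiniModulus (ω : ℝ → ℝ) (A : ℝ) : Prop where
  nonneg : ∀ t ∈ Icc 0 A, 0 ≤ ω t
  monotoneOn : MonotoneOn ω (Icc 0 A)
  integrableOn : IntegrableOn (fun t => ω t / t) (Ioc 0 A)

/-- The Stieltjes-type potential `ζ ↦ ∫₀ᴬ ω(t) ζ / (t (t + ζ)) dt` of a Dini modulus, holomorphic
on the right half-plane. -/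
noncomputable def diniPotential (ω : ℝ → ℝ) (A : ℝ) (ζ : ℂ) : ℂ :=
  ∫ t in Ioc 0 A, ((ω t / t : ℝ) : ℂ) * (ζ / (t + ζ))

/-- The perturbation `ζ (1 - 25 u(ζ))` of the identity, `u` being the Dini potential. The image of
a small disc tangent to the imaginary axis at `0` stays in the cusp-like region
`ω(|w|) |w| < Re w`: the constant `25` is what beats the factor `2 / 25` in
`im_sq_mul_le_im_mul_im_diniPotential` with a margin of `2`. -/
noncomputable def diniMap (ω : ℝ → ℝ) (A : ℝ) (ζ : ℂ) : ℂ := ζ * (1 - 25 * diniPotential ω A ζ)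

lemma mul_sub_le_setIntegral_Ioc {f : ℝ → ℝ} {A a b c : ℝ} (hf : IntegrableOn f (Ioc 0 A))
    (hf0 : ∀ t ∈ Ioc 0 A, 0 ≤ f t) (ha : 0 ≤ a) (hab : a ≤ b) (hbA : b ≤ A)
    (hc : ∀ t ∈ Ioc a b, c ≤ f t) : c * (b - a) ≤ ∫ t in Ioc 0 A, f t := by
  have hsub : Ioc a b ⊆ Ioc 0 A := Ioc_subset_Ioc ha hbA
  calc c * (b - a) = c * volume.real (Ioc a b) := by rw [Real.volume_real_Ioc_of_le hab]
    _ ≤ ∫ t in Ioc a b, f t := setIntegral_ge_of_const_le_real measurableSet_Ioc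
        measure_Ioc_lt_top.ne hc (hf.mono_set hsub)
    _ ≤ ∫ t in Ioc 0 A, f t := setIntegral_mono_set hf
        (ae_restrict_of_forall_mem measurableSet_Ioc hf0) hsub.eventuallyLE

namespace IsDiniModulus

variable {ω : ℝ → ℝ} {A : ℝ}

lemma mono (hω : IsDiniModulus ω A) {B : ℝ} (hBA : B ≤ A) : IsDiniModulus ω B where
  nonneg t ht := hω.nonneg t ⟨ht.1, ht.2.trans hBA⟩
  monotoneOn := hω.monotoneOn.mono (Icc_subset_Icc_right hBA)
  integrableOn := hω.integrableOn.mono_set (Ioc_subset_Ioc_right hBA)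

lemma div_nonneg (hω : IsDiniModulus ω A) {t : ℝ} (ht : t ∈ Ioc 0 A) : 0 ≤ ω t / t :=
  _root_.div_nonneg (hω.nonneg t (Ioc_subset_Icc_self ht)) ht.1.le

lemma le_two_mul_integral (hω : IsDiniModulus ω A) {s : ℝ} (hs : 0 < s) (hsA : 2 * s ≤ A) :
    ω s ≤ 2 * ∫ t in Ioc 0 A, ω t / t := by
  have h : ω s / (2 * s) * (2 * s - s) ≤ ∫ t in Ioc 0 A, ω t / t := by
    refine mul_sub_le_setIntegral_Ioc hω.integrableOn (fun _ => hω.div_nonneg) hs.le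
      (by linarith) hsA fun t ht => ?_
    have ht0 : 0 < t := hs.trans ht.1
    have hωs := hω.nonneg s ⟨hs.le, by linarith⟩
    have hωst : ω s ≤ ω t :=
      hω.monotoneOn ⟨hs.le, by linarith⟩ ⟨ht0.le, ht.2.trans hsA⟩ ht.1.le
    gcongr
    · exact hωs.trans hωst
    · exact ht.2
  have hs2 : ω s / (2 * s) * (2 * s - s) = ω s / 2 := by field_simp; ring
  linarith

end IsDiniModulus

section OfRealAdd

variable {t : ℝ} {ζ : ℂ}

lemma norm_le_norm_ofReal_add (ht : 0 ≤ t) (hζ : 0 ≤ ζ.re) : ‖ζ‖ ≤ ‖t + ζ‖ := by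
  refine le_of_sq_le_sq ?_ (norm_nonneg _)
  simp only [← Complex.normSq_eq_norm_sq, Complex.normSq_apply, Complex.add_re, Complex.add_im,
    Complex.ofReal_re, Complex.ofReal_im]
  nlinarith

lemma add_re_le_norm_ofReal_add (t : ℝ) (ζ : ℂ) : t + ζ.re ≤ ‖t + ζ‖ := by
  simpa using Complex.re_le_norm (t + ζ)

lemma ofReal_add_ne_zero (ht : 0 ≤ t) (hζ : 0 < ζ.re) : (t + ζ : ℂ) ≠ 0 :=
  norm_pos_iff.1 ((add_pos_of_nonneg_of_pos ht hζ).trans_le (add_re_le_norm_ofReal_add t ζ))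

lemma norm_div_ofReal_add_le_one (ht : 0 ≤ t) (hζ : 0 ≤ ζ.re) : ‖ζ / (t + ζ)‖ ≤ 1 := by
  rw [norm_div]
  exact div_le_one_of_le₀ (norm_le_norm_ofReal_add ht hζ) (norm_nonneg _)

lemma im_mul_im_div_ofReal_add (t : ℝ) (ζ : ℂ) :
    ζ.im * (ζ / (t + ζ)).im = t * (ζ.im ^ 2 / ‖t + ζ‖ ^ 2) := by
  rw [Complex.div_im, Complex.normSq_eq_norm_sq]
  simp only [Complex.add_re, Complex.ofReal_re, Complex.add_im, Complex.ofReal_im]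
  ring

lemma hasDerivAt_div_ofReal_add (ht : 0 ≤ t) (hζ : 0 < ζ.re) :
    HasDerivAt (fun z : ℂ => z / (t + z)) (t / (t + ζ) ^ 2) ζ :=
  ((hasDerivAt_id ζ).div ((hasDerivAt_id ζ).const_add (t : ℂ))
    (ofReal_add_ne_zero ht hζ)).congr_deriv (by simp)

lemma norm_div_ofReal_add_sq_le {m : ℝ} (ht : 0 < t) (hm : 0 < m) (hζ : m ≤ ζ.re) :
    ‖(t / (t + ζ) ^ 2 : ℂ)‖ ≤ m⁻¹ := by
  have h := add_re_le_norm_ofReal_add t ζ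
  have hpos : 0 < ‖t + ζ‖ := by linarith
  rw [norm_div, norm_pow, Complex.norm_of_nonneg ht.le, div_le_iff₀ (by positivity),
    inv_mul_eq_div, le_div_iff₀ hm, sq]
  gcongr <;> linarith

end OfRealAdd

section Potential

variable {ω : ℝ → ℝ} {A : ℝ} {ζ : ℂ}

lemma norm_diniPotential_integrand_le (hω : IsDiniModulus ω A) (hζ : 0 ≤ ζ.re) {t : ℝ}
    (ht : t ∈ Ioc 0 A) : ‖((ω t / t : ℝ) : ℂ) * (ζ / (t + ζ))‖ ≤ ω t / t := by
  rw [norm_mul, Complex.norm_of_nonneg (hω.div_nonneg ht)]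
  exact mul_le_of_le_one_right (hω.div_nonneg ht) (norm_div_ofReal_add_le_one ht.1.le hζ)

lemma aestronglyMeasurable_ofReal_mul (hω : IsDiniModulus ω A) {f : ℝ → ℂ}
    (hf : ContinuousOn f (Ioc 0 A)) :
    AEStronglyMeasurable (fun t => ((ω t / t : ℝ) : ℂ) * f t) (volume.restrict (Ioc 0 A)) :=
  (Complex.continuous_ofReal.comp_aestronglyMeasurable
    hω.integrableOn.aestronglyMeasurable).mul (hf.aestronglyMeasurable measurableSet_Ioc)

lemma integrableOn_diniPotential_integrand (hω : IsDiniModulus ω A) (hζ : 0 < ζ.re) :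
    IntegrableOn (fun t : ℝ => ((ω t / t : ℝ) : ℂ) * (ζ / (t + ζ))) (Ioc 0 A) := by
  refine Integrable.mono' hω.integrableOn (aestronglyMeasurable_ofReal_mul hω ?_)
    (ae_restrict_of_forall_mem measurableSet_Ioc fun _ =>
      norm_diniPotential_integrand_le hω hζ.le)
  exact continuousOn_const.div (by fun_prop) fun t ht => ofReal_add_ne_zero ht.1.le hζ

lemma norm_diniPotential_le (hω : IsDiniModulus ω A) (hζ : 0 ≤ ζ.re) :
    ‖diniPotential ω A ζ‖ ≤ ∫ t in Ioc 0 A, ω t / t :=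
  norm_integral_le_of_norm_le hω.integrableOn
    (ae_restrict_of_forall_mem measurableSet_Ioc fun _ =>
      norm_diniPotential_integrand_le hω hζ)

lemma diniPotential_ofReal (ω : ℝ → ℝ) (A s : ℝ) :
    diniPotential ω A s = ((∫ t in Ioc 0 A, ω t / t * (s / (t + s)) : ℝ) : ℂ) := by
  rw [diniPotential, ← integral_complex_ofReal]
  push_cast
  rfl

lemma differentiableAt_diniPotential (hω : IsDiniModulus ω A) (hζ : 0 < ζ.re) :
    DifferentiableAt ℂ (diniPotential ω A) ζ := by
  have hball : ∀ z ∈ ball ζ (ζ.re / 2), ζ.re / 2 ≤ z.re := fun z hz => by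
    have h := (Complex.abs_re_le_norm (z - ζ)).trans_lt (mem_ball_iff_norm.1 hz)
    rw [abs_lt, Complex.sub_re] at h
    linarith [h.1]
  have hnhds : ball ζ (ζ.re / 2) ∈ 𝓝 ζ := ball_mem_nhds _ (half_pos hζ)
  refine (hasDerivAt_integral_of_dominated_loc_of_deriv_le
    (F := fun z t => ((ω t / t : ℝ) : ℂ) * (z / (t + z)))
    (F' := fun z t => ((ω t / t : ℝ) : ℂ) * (t / (t + z) ^ 2))
    (bound := fun t => ω t / t * (ζ.re / 2)⁻¹)
    hnhds ?_ (integrableOn_diniPotential_integrand hω hζ) ?_ ?_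
    (hω.integrableOn.mul_const _) ?_).2.differentiableAt
  · filter_upwards [hnhds] with z hz
    exact (integrableOn_diniPotential_integrand hω
      ((half_pos hζ).trans_le (hball z hz))).aestronglyMeasurable
  · refine aestronglyMeasurable_ofReal_mul hω (ContinuousOn.div (by fun_prop) (by fun_prop) ?_)
    exact fun t ht => pow_ne_zero _ (ofReal_add_ne_zero ht.1.le hζ)
  · refine ae_restrict_of_forall_mem measurableSet_Ioc fun t ht z hz => ?_
    rw [norm_mul, Complex.norm_of_nonneg (hω.div_nonneg ht)]
    exact mul_le_mul_of_nonneg_left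
      (norm_div_ofReal_add_sq_le ht.1 (half_pos hζ) (hball z hz)) (hω.div_nonneg ht)
  · exact ae_restrict_of_forall_mem measurableSet_Ioc fun t ht z hz =>
      (hasDerivAt_div_ofReal_add ht.1.le ((half_pos hζ).trans_le (hball z hz))).const_mul _

lemma im_sq_mul_le_im_mul_im_diniPotential (hω : IsDiniModulus ω A) (hζ : 0 < ζ.re)
    (hζA : 4 * ‖ζ‖ ≤ A) :
    ζ.im ^ 2 * (2 / 25 * ω (2 * ‖ζ‖) / ‖ζ‖) ≤ ζ.im * (diniPotential ω A ζ).im := by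
  have hs : 0 < ‖ζ‖ := hζ.trans_le (Complex.re_le_norm ζ)
  have hint := integrableOn_diniPotential_integrand hω hζ
  have him : ζ.im * (diniPotential ω A ζ).im =
      ∫ t in Ioc 0 A, ζ.im * (((ω t / t : ℝ) : ℂ) * (ζ / (t + ζ))).im := by
    rw [integral_const_mul, diniPotential]
    exact congrArg _ (integral_im hint).symm
  have hpoint : ∀ t ∈ Ioc 0 A, ζ.im * (((ω t / t : ℝ) : ℂ) * (ζ / (t + ζ))).im =
      ω t * (ζ.im ^ 2 / ‖t + ζ‖ ^ 2) := fun t ht => by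
    rw [Complex.im_ofReal_mul, mul_left_comm, im_mul_im_div_ofReal_add, ← mul_assoc,
      div_mul_cancel₀ _ ht.1.ne']
  have hlow : ω (2 * ‖ζ‖) * (ζ.im ^ 2 / (5 * ‖ζ‖) ^ 2) * (4 * ‖ζ‖ - 2 * ‖ζ‖) ≤
      ∫ t in Ioc 0 A, ζ.im * (((ω t / t : ℝ) : ℂ) * (ζ / (t + ζ))).im := by
    refine mul_sub_le_setIntegral_Ioc (hint.im.const_mul _) (fun t ht => ?_) (by linarith)
      (by linarith) hζA fun t ht => ?_
    · rw [hpoint t ht]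
      exact mul_nonneg (hω.nonneg t (Ioc_subset_Icc_self ht)) (by positivity)
    · have ht0 : 0 < t := (by linarith : 0 < 2 * ‖ζ‖).trans ht.1
      have hpos : 0 < ‖t + ζ‖ := norm_pos_iff.2 (ofReal_add_ne_zero ht0.le hζ)
      have htζ : ‖t + ζ‖ ≤ 5 * ‖ζ‖ := by
        have h := norm_add_le (t : ℂ) ζ
        rw [Complex.norm_of_nonneg ht0.le] at h
        linarith [ht.2]
      have htA := ht.2.trans hζA
      rw [hpoint t ⟨ht0, htA⟩]
      have hω0 := hω.nonneg t ⟨ht0.le, htA⟩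
      gcongr
      exact hω.monotoneOn ⟨by linarith, by linarith⟩ ⟨ht0.le, htA⟩ ht.1.le
  rw [him]
  refine le_of_eq_of_le ?_ hlow
  field_simp
  ring

end Potential

section Map

variable {ω : ℝ → ℝ} {A R : ℝ} {ζ : ℂ}

lemma re_pos_of_mem_ball_ofReal (hζ : ζ ∈ ball (R : ℂ) R) : 0 < ζ.re := by
  have h := (Complex.abs_re_le_norm (ζ - R)).trans_lt (mem_ball_iff_norm.1 hζ)
  rw [abs_lt, Complex.sub_re, Complex.ofReal_re] at h
  linarith [h.1]

lemma differentiableAt_diniMap (hω : IsDiniModulus ω A) (hζ : 0 < ζ.re) :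
    DifferentiableAt ℂ (diniMap ω A) ζ :=
  differentiableAt_id.mul (((differentiableAt_diniPotential hω hζ).const_mul 25).const_sub 1)

lemma norm_diniMap_le (hω : IsDiniModulus ω A) (hI : ∫ t in Ioc 0 A, ω t / t ≤ 1 / 2500)
    (hζ : 0 ≤ ζ.re) : ‖diniMap ω A ζ‖ ≤ 2 * ‖ζ‖ := by
  have hu := (norm_diniPotential_le hω hζ).trans hI
  have h1 : ‖1 - 25 * diniPotential ω A ζ‖ ≤ 2 := by
    have h := norm_sub_le 1 (25 * diniPotential ω A ζ)
    rw [norm_mul, norm_one, Complex.norm_ofNat] at h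
    linarith
  rw [diniMap, norm_mul, mul_comm 2]
  gcongr

lemma modulus_mul_norm_lt_diniMap_re (hω : IsDiniModulus ω A)
    (hI : ∫ t in Ioc 0 A, ω t / t ≤ 1 / 2500) (hζ : 0 < ζ.re) (hζA : 4 * ‖ζ‖ ≤ A) :
    ω ‖diniMap ω A ζ‖ * ‖diniMap ω A ζ‖ < (diniMap ω A ζ).re := by
  have hre := Complex.re_le_norm ζ
  have hs : 0 < ‖ζ‖ := hζ.trans_le hre
  have hs2 : 2 * ‖ζ‖ ∈ Icc 0 A := ⟨by linarith, by linarith⟩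
  have hnorm := norm_diniMap_le hω hI hζ.le
  have hω0 := hω.nonneg _ hs2
  have hω1 : ω (2 * ‖ζ‖) ≤ 1 / 1000 := by
    linarith [hω.le_two_mul_integral (s := 2 * ‖ζ‖) (by linarith) (by linarith)]
  have hle : ω ‖diniMap ω A ζ‖ * ‖diniMap ω A ζ‖ ≤ ω (2 * ‖ζ‖) * (2 * ‖ζ‖) := by
    gcongr
    exact hω.monotoneOn ⟨norm_nonneg _, hnorm.trans hs2.2⟩ hs2 hnorm
  have hre' : (diniMap ω A ζ).re =
      ζ.re * (1 - 25 * (diniPotential ω A ζ).re) + 25 * (ζ.im * (diniPotential ω A ζ).im) := by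
    simp only [diniMap, Complex.mul_re, Complex.sub_re, Complex.sub_im, Complex.mul_im,
      Complex.one_re, Complex.one_im, Complex.re_ofNat, Complex.im_ofNat]
    ring
  have hu : (diniPotential ω A ζ).re ≤ 1 / 50 := by
    linarith [Complex.re_le_norm (diniPotential ω A ζ), norm_diniPotential_le hω hζ.le]
  have him : 2 / 25 * ω (2 * ‖ζ‖) * (‖ζ‖ - ζ.re) ≤ ζ.im * (diniPotential ω A ζ).im := by
    refine le_trans ?_ (im_sq_mul_le_im_mul_im_diniPotential hω hζ hζA)
    have hsq : ζ.im ^ 2 = (‖ζ‖ - ζ.re) * (‖ζ‖ + ζ.re) := by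
      have h := Complex.sq_norm ζ
      rw [Complex.normSq_apply] at h
      linear_combination -h
    rw [hsq, ← mul_div_assoc, le_div_iff₀ hs]
    have := mul_nonneg hω0 (mul_nonneg hζ.le (sub_nonneg.2 hre))
    nlinarith
  rw [hre']
  nlinarith

lemma exists_diniMap_ofReal_eq (hω : IsDiniModulus ω A)
    (hI : ∫ t in Ioc 0 A, ω t / t ≤ 1 / 2500) {s : ℝ} (hs : 0 < s) :
    ∃ r ∈ Icc (99 / 100 * s) s, diniMap ω A s = (r : ℂ) := by
  have hnorm := norm_diniPotential_le hω (ζ := s) hs.le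
  have hnonneg : 0 ≤ ∫ t in Ioc 0 A, ω t / t * (s / (t + s)) :=
    setIntegral_nonneg measurableSet_Ioc fun t ht => mul_nonneg (hω.div_nonneg ht)
      (div_nonneg hs.le (add_nonneg ht.1.le hs.le))
  have hreal := diniPotential_ofReal ω A s
  rw [hreal, Complex.norm_of_nonneg hnonneg] at hnorm
  set r := ∫ t in Ioc 0 A, ω t / t * (s / (t + s))
  refine ⟨s * (1 - 25 * r), ⟨by nlinarith, by nlinarith⟩, ?_⟩
  rw [diniMap, hreal]
  push_cast
  rfl

lemma exists_mem_Icc_diniMap_eq (hω : IsDiniModulus ω A)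
    (hI : ∫ t in Ioc 0 A, ω t / t ≤ 1 / 2500) {s H : ℝ} (hs : 0 < s) (hsH : s ≤ 100 / 99 * H)
    (hle : (diniMap ω A s).re ≤ H) :
    ∃ s' ∈ Icc s (100 / 99 * H), diniMap ω A s' = (H : ℂ) := by
  have hcont : ContinuousOn (fun t : ℝ => (diniMap ω A t).re) (Icc s (100 / 99 * H)) :=
    fun t ht => ContinuousAt.continuousWithinAt <|
      Complex.continuous_re.continuousAt.comp <|
        (differentiableAt_diniMap hω (ζ := t)
          (by simpa using hs.trans_le ht.1)).continuousAt.comp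
        Complex.continuous_ofReal.continuousAt
  obtain ⟨r, hr, hrH⟩ := exists_diniMap_ofReal_eq hω hI (hs.trans_le hsH)
  have hHr : H ≤ (diniMap ω A (100 / 99 * H : ℝ)).re := by
    rw [hrH, Complex.ofReal_re]
    linarith [hr.1]
  obtain ⟨s', hs', hH⟩ := intermediate_value_Icc hsH hcont ⟨hle, hHr⟩
  obtain ⟨r', -, hr'⟩ := exists_diniMap_ofReal_eq hω hI (hs.trans_le hs'.1)
  refine ⟨s', hs', ?_⟩
  rw [← hH]
  simp only [hr', Complex.ofReal_re]

end Map

end DiniMap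

section NormalApproach

variable {E : Type*} [NormedAddCommGroup E] [InnerProductSpace ℂ E]

attribute [local instance] InnerProductSpace.complexToReal

open scoped InnerProductSpace

/-- The cusp-like region of radius `r` around the direction `n`, with vertex `0`, which every
domain whose unit normal has modulus of continuity `ω` contains after translation. -/
def diniCone (ω : ℝ → ℝ) (n : E) (r : ℝ) : Set E :=
  {w | ‖w‖ < r ∧ ω ‖w‖ * ‖w‖ < ⟪n, w⟫_ℝ}

lemma smul_mem_diniCone {ω : ℝ → ℝ} {n : E} (hn : ‖n‖ = 1) {r : ℝ} {z : ℂ} (hzr : ‖z‖ < r)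
    (hz : ω ‖z‖ * ‖z‖ < z.re) : z • n ∈ diniCone ω n r := by
  have hnz : ‖z • n‖ = ‖z‖ := by rw [norm_smul, hn, mul_one]
  refine ⟨hnz.trans_lt hzr, ?_⟩
  change _ < (⟪n, z • n⟫_ℂ).re
  rw [hnz, inner_smul_right, inner_self_eq_norm_sq_to_K, hn]
  simpa using hz

lemma kobJoined_add_smul_of_diniCone [CompleteSpace E] {D : Set E} {P n : E} {ω : ℝ → ℝ}
    {A R : ℝ} (hω : IsDiniModulus ω A) (hI : ∫ t in Ioc 0 A, ω t / t ≤ 1 / 2500)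
    (hRA : 8 * R ≤ A) (hn : ‖n‖ = 1) (hD : ∀ w ∈ diniCone ω n (4 * R), P + w ∈ D) {δ H : ℝ}
    (hδ : 0 < δ) (hδH : δ ≤ H) (hHR : 50 * H ≤ R) :
    KobJoined D (P + δ • n) (P + H • n) (2⁻¹ * Real.log (H / δ) + 3 / 100) := by
  have hH : 0 < H := hδ.trans_le hδH
  obtain ⟨s₀, hs₀, hδs₀⟩ := exists_mem_Icc_diniMap_eq hω hI hδ (by linarith) (H := δ) <| by
    obtain ⟨r, hr, hrδ⟩ := exists_diniMap_ofReal_eq hω hI hδ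
    rw [hrδ, Complex.ofReal_re]
    exact hr.2
  have hs₀0 : 0 < s₀ := hδ.trans_le hs₀.1
  obtain ⟨s₁, hs₁, hHs₁⟩ := exists_mem_Icc_diniMap_eq hω hI hs₀0 (H := H)
    (by linarith [hs₀.2]) (by rwa [hδs₀, Complex.ofReal_re])
  have hG : DifferentiableOn ℂ (fun z => P + diniMap ω A z • n) (ball (R : ℂ) R) := fun z hz =>
    (((differentiableAt_diniMap hω (re_pos_of_mem_ball_ofReal hz)).smul_const n).const_add
      P).differentiableWithinAt
  have hGD : MapsTo (fun z => P + diniMap ω A z • n) (ball (R : ℂ) R) D := fun z hz => by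
    have hre := re_pos_of_mem_ball_ofReal hz
    have hz2 : ‖z‖ < 2 * R := by
      have h := norm_add_le (z - R) (R : ℂ)
      rw [sub_add_cancel, Complex.norm_of_nonneg (by linarith)] at h
      linarith [mem_ball_iff_norm.1 hz]
    exact hD _ (smul_mem_diniCone hn (by linarith [norm_diniMap_le hω hI hre.le])
      (modulus_mul_norm_lt_diniMap_re hω hI hre (by linarith)))
  have hjoin := kobJoined_of_differentiableOn_ball hG hGD hs₀0 hs₁.1 (by linarith [hs₁.2])
  simp only [hδs₀, hHs₁, Complex.coe_smul] at hjoin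
  refine hjoin.mono ?_
  have hlog : Real.log (s₁ / s₀) ≤ 1 / 99 + Real.log (H / δ) := by
    calc Real.log (s₁ / s₀) ≤ Real.log (100 / 99 * (H / δ)) := by
          refine Real.log_le_log (div_pos (hs₀0.trans_le hs₁.1) hs₀0) ?_
          rw [mul_div_assoc']
          exact div_le_div₀ (by positivity) hs₁.2 hδ hs₀.1
      _ = Real.log (100 / 99) + Real.log (H / δ) := Real.log_mul (by norm_num) (by positivity)
      _ ≤ 1 / 99 + Real.log (H / δ) := by
          gcongr
          exact (Real.log_le_sub_one_of_pos (by norm_num)).trans (by norm_num)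
  have hdisc : (s₁ - s₀) / (2 * R) ≤ 1 / 99 := by
    rw [div_le_iff₀ (by linarith)]
    linarith [hs₁.2]
  linarith

end NormalApproach

section BoundaryDistance

variable {E : Type*} [NormedAddCommGroup E] {D : Set E} {p : E}

lemma bdist_pos (hD : IsOpen D) (hD' : (frontier D).Nonempty) (hp : p ∈ D) : 0 < bdist D p :=
  (isClosed_frontier.notMem_iff_infDist_pos hD').1 fun h => (hD.frontier_eq ▸ h).2 hp

variable [NormedSpace ℂ E]

lemma ball_bdist_subset (hD : IsOpen D) (hp : p ∈ D) : ball p (bdist D p) ⊆ D := by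
  rcases (ball p (bdist D p)).eq_empty_or_nonempty with h | h
  · rw [h]
    exact empty_subset _
  have hcover : ball p (bdist D p) ⊆ D ∪ (closure D)ᶜ := fun x hx => by
    have hxD : x ∉ frontier D := disjoint_left.1 disjoint_ball_infDist hx
    rw [hD.frontier_eq, Set.mem_sdiff, not_and_not_right] at hxD
    exact (em (x ∈ closure D)).imp hxD id
  exact (convex_ball p _).isPreconnected.subset_left_of_subset_union hD
    isClosed_closure.isOpen_compl
    (disjoint_compl_right.mono_right (compl_subset_compl.2 subset_closure)) hcover
    ⟨p, mem_ball_self (nonempty_ball.1 h), hp⟩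

end BoundaryDistance

lemma neg_of_hasDerivAt_neg_of_eq_zero {f f' : ℝ → ℝ} {a b : ℝ} (hab : a < b)
    (hf : ∀ s ∈ Icc a b, HasDerivAt f (f' s) s) (ha : f a ≤ 0)
    (hf' : ∀ s ∈ Icc a b, f s = 0 → f' s < 0) : f b < 0 := by
  have hle : ∀ ⦃s⦄, s ∈ Icc a b → f s ≤ 0 :=
    image_le_of_deriv_right_lt_deriv_boundary' (B := fun _ => 0) (B' := fun _ => 0)
      (fun s hs => (hf s hs).continuousAt.continuousWithinAt)
      (fun s hs => (hf s (Ico_subset_Icc_self hs)).hasDerivWithinAt) ha continuousOn_const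
      (fun _ _ => hasDerivWithinAt_const _ _ _) (fun s hs => hf' s (Ico_subset_Icc_self hs))
  have hb : b ∈ Icc a b := right_mem_Icc.2 hab.le
  refine (hle hb).lt_of_ne fun hfb => ?_
  have hmax : IsLocalMaxOn f (Icc a b) b :=
    eventually_nhdsWithin_of_forall fun s hs => (hle hs).trans_eq hfb.symm
  have hcone : a - b ∈ posTangentConeAt (Icc a b) b := by
    apply sub_mem_posTangentConeAt_of_segment_subset
    rw [segment_symm, segment_eq_Icc hab.le]
  have h := hmax.hasFDerivWithinAt_nonpos (hf b hb).hasFDerivAt.hasFDerivWithinAt hcone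
  simp only [ContinuousLinearMap.toSpanSingleton_apply, smul_eq_mul] at h
  nlinarith [hf' b hb hfb]

section InnerNormal

variable {E : Type*} [NormedAddCommGroup E] [InnerProductSpace ℂ E] [CompleteSpace E]

attribute [local instance] InnerProductSpace.complexToReal

open scoped InnerProductSpace

/-- The unit normal at `x` of the level set of `ρ` through `x`, pointing into `{ρ < ρ x}`; it
is `0` when `x` is a critical point of `ρ`. -/
noncomputable def innerNormal (ρ : E → ℝ) (x : E) : E :=
  (InnerProductSpace.toDual ℝ E).symm (-(‖fderiv ℝ ρ x‖⁻¹ • fderiv ℝ ρ x))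

variable {ρ : E → ℝ} {x : E}

lemma inner_innerNormal (ρ : E → ℝ) (x w : E) :
    ⟪innerNormal ρ x, w⟫_ℝ = -(‖fderiv ℝ ρ x‖⁻¹ * fderiv ℝ ρ x w) := by
  rw [innerNormal, InnerProductSpace.toDual_symm_apply]
  rfl

lemma norm_innerNormal (hx : fderiv ℝ ρ x ≠ 0) : ‖innerNormal ρ x‖ = 1 := by
  rw [innerNormal, LinearIsometryEquiv.norm_map, norm_neg, norm_smul, norm_inv, norm_norm,
    inv_mul_cancel₀ (norm_ne_zero_iff.2 hx)]

lemma norm_innerNormal_sub (ρ : E → ℝ) (x y : E) :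
    ‖innerNormal ρ x - innerNormal ρ y‖ =
      ‖‖fderiv ℝ ρ x‖⁻¹ • fderiv ℝ ρ x - ‖fderiv ℝ ρ y‖⁻¹ • fderiv ℝ ρ y‖ := by
  rw [innerNormal, innerNormal, ← map_sub, LinearIsometryEquiv.norm_map, neg_sub_neg,
    norm_sub_rev]

end InnerNormal

namespace IsLocalDefiningFn

variable {E : Type*} [NormedAddCommGroup E] [InnerProductSpace ℂ E]

attribute [local instance] InnerProductSpace.complexToReal

open scoped InnerProductSpace

variable {D W : Set E} {ξ P p x : E} {ρ : E → ℝ}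

lemma mem_iff (h : IsLocalDefiningFn D ξ W ρ) (hx : x ∈ W) : x ∈ D ↔ ρ x < 0 := by
  simpa [hx] using Set.ext_iff.1 h.2.2.2.2.1 x

lemma mem_frontier_iff (h : IsLocalDefiningFn D ξ W ρ) (hx : x ∈ W) :
    x ∈ frontier D ↔ ρ x = 0 := by
  simpa [hx] using Set.ext_iff.1 h.2.2.2.2.2 x

lemma mem_nhds (h : IsLocalDefiningFn D ξ W ρ) (hx : x ∈ W) : W ∈ 𝓝 x := h.1.mem_nhds hx

lemma fderiv_ne_zero (h : IsLocalDefiningFn D ξ W ρ) (hx : x ∈ W) : fderiv ℝ ρ x ≠ 0 :=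
  h.2.2.2.1 x hx

lemma hasStrictFDerivAt (h : IsLocalDefiningFn D ξ W ρ) (hx : x ∈ W) :
    HasStrictFDerivAt ρ (fderiv ℝ ρ x) x :=
  (h.2.2.1.contDiffAt (h.mem_nhds hx)).hasStrictFDerivAt one_ne_zero

lemma exists_sub_eq_smul_innerNormal [CompleteSpace E] (h : IsLocalDefiningFn D ξ W ρ)
    (hPW : P ∈ W) (hP : P ∈ frontier D) (hball : ball p ‖p - P‖ ⊆ D) :
    ∃ c : ℝ, p - P = c • innerNormal ρ P := by
  have hmin : IsLocalMinOn (fun x => ‖x - p‖ ^ 2) {x | ρ x = ρ P} P := by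
    filter_upwards [self_mem_nhdsWithin, nhdsWithin_le_nhds (h.mem_nhds hPW)] with x hx hxW
    have hρx : ρ x = 0 := hx.trans ((h.mem_frontier_iff hPW).1 hP)
    have hxball : x ∉ ball p ‖p - P‖ := fun hx => ((h.mem_iff hxW).1 (hball hx)).ne hρx
    rw [mem_ball_iff_norm, not_lt, norm_sub_rev] at hxball
    gcongr
  have hsq : HasStrictFDerivAt (fun x => ‖x - p‖ ^ 2) (2 • innerSL ℝ (P - p)) P := by
    simpa using (hasStrictFDerivAt_norm_sq (P - p)).comp P ((hasStrictFDerivAt_id P).sub_const p)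
  obtain ⟨a, b, hab, hlin⟩ := IsLocalExtrOn.exists_multipliers_of_hasStrictFDerivAt_1d
    (Or.inl hmin) (h.hasStrictFDerivAt hPW) hsq
  have hρ := h.fderiv_ne_zero hPW
  have hb : b ≠ 0 := by
    rintro rfl
    simp_all
  refine ⟨-(a * ‖fderiv ℝ ρ P‖ / (2 * b)), ext_inner_right ℝ fun w => ?_⟩
  have hw : a * fderiv ℝ ρ P w + b * (2 * ⟪P - p, w⟫_ℝ) = 0 := by
    simpa [inner_sub_left] using DFunLike.congr_fun hlin w
  rw [real_inner_smul_left, inner_innerNormal, ← neg_sub P p, inner_neg_left]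
  have hρ' := norm_ne_zero_iff.2 hρ
  field_simp
  linarith

lemma inner_innerNormal_nonneg [CompleteSpace E] (h : IsLocalDefiningFn D ξ W ρ)
    (hPW : P ∈ W) (hP : P ∈ frontier D) (hball : ball p ‖p - P‖ ⊆ D) :
    0 ≤ ⟪innerNormal ρ P, p - P⟫_ℝ := by
  have hmax : IsLocalMaxOn ρ (segment ℝ P p) P := by
    filter_upwards [self_mem_nhdsWithin, nhdsWithin_le_nhds (h.mem_nhds hPW)] with x hx hxW
    rw [(h.mem_frontier_iff hPW).1 hP]
    rcases eq_or_ne x P with rfl | hxP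
    · exact ((h.mem_frontier_iff hPW).1 hP).le
    · refine ((h.mem_iff hxW).1 (hball ?_)).le
      rw [mem_ball, ← dist_eq_norm, dist_comm p, ← dist_add_dist_of_mem_segment hx]
      exact lt_add_of_pos_left _ (dist_pos.2 hxP.symm)
  have hle := hmax.hasFDerivWithinAt_nonpos
    (h.hasStrictFDerivAt hPW).hasFDerivAt.hasFDerivWithinAt
    (sub_mem_posTangentConeAt_of_segment_subset Subset.rfl)
  rw [inner_innerNormal, neg_nonneg]
  exact mul_nonpos_of_nonneg_of_nonpos (inv_nonneg.2 (norm_nonneg _)) hle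

lemma sub_eq_norm_smul_innerNormal [CompleteSpace E] (h : IsLocalDefiningFn D ξ W ρ)
    (hPW : P ∈ W) (hP : P ∈ frontier D) (hball : ball p ‖p - P‖ ⊆ D) :
    p - P = ‖p - P‖ • innerNormal ρ P := by
  obtain ⟨c, hc⟩ := h.exists_sub_eq_smul_innerNormal hPW hP hball
  have hn := norm_innerNormal (h.fderiv_ne_zero hPW)
  have hc0 := h.inner_innerNormal_nonneg hPW hP hball
  rw [hc, inner_smul_right, real_inner_self_eq_norm_sq, hn, one_pow, mul_one] at hc0
  rw [hc, norm_smul, hn, mul_one, Real.norm_of_nonneg hc0]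

lemma add_mem_of_mem_diniCone [CompleteSpace E] (h : IsLocalDefiningFn D ξ W ρ) {ω : ℝ → ℝ}
    {r : ℝ} (hω : MonotoneOn ω (Icc 0 r)) (hP : P ∈ frontier D) (hW : ball P r ⊆ W)
    (hN : ∀ x ∈ frontier D ∩ ball P r, ‖innerNormal ρ x - innerNormal ρ P‖ ≤ ω ‖x - P‖) {w : E}
    (hw : w ∈ diniCone ω (innerNormal ρ P) r) : P + w ∈ D := by
  have hnorm : ∀ s ∈ Icc (0 : ℝ) 1, ‖s • w‖ ≤ ‖w‖ := fun s hs => by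
    rw [norm_smul, Real.norm_of_nonneg hs.1]
    exact mul_le_of_le_one_left (norm_nonneg w) hs.2
  have hmem : ∀ s ∈ Icc (0 : ℝ) 1, P + s • w ∈ ball P r := fun s hs => by
    rw [mem_ball_iff_norm, add_sub_cancel_left]
    exact (hnorm s hs).trans_lt hw.1
  have hder : ∀ s ∈ Icc (0 : ℝ) 1,
      HasDerivAt (fun s : ℝ => ρ (P + s • w)) (fderiv ℝ ρ (P + s • w) w) s := fun s hs =>
    (h.hasStrictFDerivAt (hW (hmem s hs))).hasFDerivAt.comp_hasDerivAt s <| by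
      simpa using ((hasDerivAt_id s).smul_const w).const_add P
  have hneg : ∀ s ∈ Icc (0 : ℝ) 1, ρ (P + s • w) = 0 → fderiv ℝ ρ (P + s • w) w < 0 := by
    intro s hs hs0
    have hxW := hW (hmem s hs)
    have hclose : ‖innerNormal ρ (P + s • w) - innerNormal ρ P‖ ≤ ω ‖w‖ := by
      refine (hN _ ⟨(h.mem_frontier_iff hxW).2 hs0, hmem s hs⟩).trans ?_
      rw [add_sub_cancel_left]
      exact hω ⟨norm_nonneg _, (hnorm s hs).trans hw.1.le⟩ ⟨norm_nonneg _, hw.1.le⟩ (hnorm s hs)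
    have hinner : 0 < ⟪innerNormal ρ (P + s • w), w⟫_ℝ := by
      have hsub := (neg_le_of_abs_le (abs_real_inner_le_norm
        (innerNormal ρ (P + s • w) - innerNormal ρ P) w))
      rw [inner_sub_left] at hsub
      linarith [hw.2, mul_le_mul_of_nonneg_right hclose (norm_nonneg w)]
    rw [inner_innerNormal, neg_pos] at hinner
    exact neg_of_mul_neg_right hinner (inv_nonneg.2 (norm_nonneg _))
  have hPW : P ∈ W := hW (mem_ball_self ((norm_nonneg w).trans_lt hw.1))
  have h1 := neg_of_hasDerivAt_neg_of_eq_zero zero_lt_one hder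
    (by simpa using ((h.mem_frontier_iff hPW).1 hP).le) hneg
  have hmem1 := hW (hmem 1 (right_mem_Icc.2 zero_le_one))
  rw [one_smul] at h1 hmem1
  exact (h.mem_iff hmem1).2 h1

end IsLocalDefiningFn

lemma sub_half_mul_norm_le_of_approximatesLinearOn {F : Type*} [NormedAddCommGroup F]
    [NormedSpace ℝ F] {f : F → ℝ} {f' : F →L[ℝ] ℝ} {s : Set F} {c : NNReal}
    (hf : ApproximatesLinearOn f f' s c) {x y z : F} (hx : x ∈ s) (hy : y ∈ s) (hz : z ∈ s)
    (hxyz : z ∈ segment ℝ x y) {m : ℝ} (hmx : m ≤ f x) (hmy : m ≤ f y) :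
    m - c / 2 * ‖y - x‖ ≤ f z := by
  rw [segment_eq_image'] at hxyz
  obtain ⟨t, ⟨ht0, ht1⟩, rfl⟩ := hxyz
  set z := x + t • (y - x)
  have hzx : z - x = t • (y - x) := add_sub_cancel_left _ _
  have hzy : z - y = -((1 - t) • (y - x)) := by simp only [z]; module
  have hfx := hf z hz x hx
  have hfy := hf z hz y hy
  rw [hzx, map_smul, norm_smul, Real.norm_of_nonneg ht0, smul_eq_mul, Real.norm_eq_abs] at hfx
  rw [hzy, map_neg, map_smul, norm_neg, norm_smul, Real.norm_of_nonneg (sub_nonneg.2 ht1),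
    smul_eq_mul, Real.norm_eq_abs] at hfy
  have hc : 0 ≤ (c : ℝ) * ‖y - x‖ := by positivity
  nlinarith [mul_le_mul_of_nonneg_left (neg_le_of_abs_le hfx) (sub_nonneg.2 ht1),
    mul_le_mul_of_nonneg_left (neg_le_of_abs_le hfy) ht0,
    mul_nonneg hc (sq_nonneg (2 * t - 1)), mul_le_mul_of_nonneg_left hmy ht0,
    mul_le_mul_of_nonneg_left hmx (sub_nonneg.2 ht1)]

section Crossing

attribute [local instance] InnerProductSpace.complexToReal

open scoped InnerProductSpace

section

variable {F : Type*} [NormedAddCommGroup F] [InnerProductSpace ℝ F] {n₀ m n : F}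

lemma norm_sub_inner_smul_le (hn₀ : ‖n₀‖ = 1) (u : F) : ‖u - ⟪n₀, u⟫_ℝ • n₀‖ ≤ ‖u‖ := by
  refine le_of_sq_le_sq ?_ (norm_nonneg u)
  rw [norm_sub_sq_real, inner_smul_right, norm_smul, hn₀, mul_one, real_inner_comm,
    Real.norm_eq_abs, sq_abs]
  nlinarith [sq_nonneg ⟪n₀, u⟫_ℝ]

lemma norm_add_smul_sub_smul_le (hn₀ : ‖n₀‖ = 1) {ε : ℝ} (hm : ‖m - n₀‖ ≤ ε)
    (hn : ‖n - n₀‖ ≤ ε) {a b H : ℝ} (ha : 0 ≤ a) (haH : a ≤ H) (hb : 0 ≤ b) (hbH : b ≤ H)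
    (u : F) : ‖u + a • m - b • n‖ ≤ ‖u‖ + |⟪n₀, u⟫_ℝ + (a - b)| + 2 * (H * ε) := by
  have hsplit : u + a • m - b • n = (u - ⟪n₀, u⟫_ℝ • n₀) + (⟪n₀, u⟫_ℝ + (a - b)) • n₀ +
      (a • (m - n₀) - b • (n - n₀)) := by module
  have hH : 0 ≤ H := ha.trans haH
  calc ‖u + a • m - b • n‖
      ≤ ‖u - ⟪n₀, u⟫_ℝ • n₀‖ + ‖(⟪n₀, u⟫_ℝ + (a - b)) • n₀‖ +
        (‖a • (m - n₀)‖ + ‖b • (n - n₀)‖) := by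
        rw [hsplit]
        exact (norm_add₃_le ..).trans (add_le_add_right (norm_sub_le _ _) _)
    _ ≤ ‖u‖ + |⟪n₀, u⟫_ℝ + (a - b)| + (H * ε + H * ε) := by
        rw [norm_smul, norm_smul, norm_smul, hn₀, mul_one, Real.norm_of_nonneg ha,
          Real.norm_of_nonneg hb, Real.norm_eq_abs]
        gcongr
        exact norm_sub_inner_smul_le hn₀ u
    _ = ‖u‖ + |⟪n₀, u⟫_ℝ + (a - b)| + 2 * (H * ε) := by ring

end

variable {E : Type*} [NormedAddCommGroup E] [InnerProductSpace ℂ E]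

/-- On `ball ξ R` the function `h` is almost the linear height `⟪n₀, ·⟫` over a hyperplane, and
`D` contains the points of positive height. It plays the role of a signed distance to `∂D`. -/
structure IsHeightFunction (D : Set E) (ξ : E) (R : ℝ) (n₀ : E) (h : E → ℝ) : Prop where
  norm_eq_one : ‖n₀‖ = 1
  approx : ApproximatesLinearOn h (innerSL ℝ n₀) (ball ξ R) (1 / 1000)
  mem_of_pos : ∀ x ∈ ball ξ R, 0 < h x → x ∈ D

/-- A ray `t ↦ P + t • n` from a point `P` of height `0`, almost in the direction `n₀`, along
which one climbs from `P + δ • n` to `P + H • n` at nearly the cost `log (H / δ) / 2` it has in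
a half-space. -/
structure IsAscent (D : Set E) (ξ : E) (R : ℝ) (n₀ : E) (h : E → ℝ) (P n : E) (δ : ℝ) :
    Prop where
  foot_mem : P ∈ ball ξ (R / 2)
  foot_eq_zero : h P = 0
  norm_eq_one : ‖n‖ = 1
  norm_sub_le : ‖n - n₀‖ ≤ 1 / 1000
  pos : 0 < δ
  kobJoined : ∀ H, δ ≤ H → 50 * H ≤ R →
    KobJoined D (P + δ • n) (P + H • n) (2⁻¹ * Real.log (H / δ) + 3 / 100)

variable {D : Set E} {ξ n₀ P Q m n x z : E} {R H α β : ℝ} {h : E → ℝ}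

lemma IsHeightFunction.abs_sub_sub_inner_le (hh : IsHeightFunction D ξ R n₀ h)
    (hx : x ∈ ball ξ R) (hz : z ∈ ball ξ R) :
    |h x - h z - ⟪n₀, x - z⟫_ℝ| ≤ 1 / 1000 * ‖x - z‖ := by
  simpa using hh.approx x hx z hz

lemma IsHeightFunction.kobMetric_le (hh : IsHeightFunction D ξ R n₀ h) (hH : 0 < H)
    (hz : ball z (15 * H) ⊆ ball ξ R) (hzH : 99 / 100 * H ≤ h z) (v : E) :
    kobMetric D z v ≤ ‖v‖ / (175 / 100 * H) := by
  have hhalf := kobMetric_le_norm_div_of_halfBall_subset (D := D) (x := z) (s := 97 / 100 * H)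
    (R := 5 * H) (by positivity) (by linarith) hh.norm_eq_one (fun w hw hwn => ?_) v
  · refine hhalf.trans (div_le_div_of_nonneg_left (norm_nonneg v) (by positivity) ?_)
    rw [mul_div_mul_right _ _ hH.ne']
    linarith
  · have hzw : z + w ∈ ball z (15 * H) := by
      rw [mem_ball_iff_norm, add_sub_cancel_left]
      linarith
    have happrox := hh.abs_sub_sub_inner_le (hz hzw) (hz (mem_ball_self (by positivity)))
    rw [add_sub_cancel_left] at happrox
    exact hh.mem_of_pos _ (hz hzw) (by linarith [neg_le_of_abs_le happrox])

lemma IsAscent.add_smul_mem_ball (ha : IsAscent D ξ R n₀ h P n α) {t : ℝ} (ht0 : 0 ≤ t)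
    (htH : t ≤ H) : P + t • n ∈ ball ξ (R / 2 + H) := by
  have hPt : dist (P + t • n) P = t := by
    rw [dist_eq_norm, add_sub_cancel_left, norm_smul, ha.norm_eq_one, mul_one,
      Real.norm_of_nonneg ht0]
  rw [mem_ball]
  linarith [dist_triangle (P + t • n) P ξ, mem_ball.1 ha.foot_mem]

lemma IsAscent.abs_height_sub_le (ha : IsAscent D ξ R n₀ h P n α)
    (hh : IsHeightFunction D ξ R n₀ h) {t : ℝ} (ht0 : 0 ≤ t) (htR : 2 * t ≤ R) :
    |h (P + t • n) - t| ≤ 2 / 1000 * t := by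
  have hmem : P + t • n ∈ ball ξ R :=
    ball_subset_ball (by linarith) (ha.add_smul_mem_ball ht0 le_rfl)
  have hP : P ∈ ball ξ R := ball_subset_ball (by linarith) ha.foot_mem
  have happrox := hh.abs_sub_sub_inner_le hmem hP
  rw [ha.foot_eq_zero, sub_zero, add_sub_cancel_left, inner_smul_right, norm_smul,
    ha.norm_eq_one, mul_one, Real.norm_of_nonneg ht0] at happrox
  have hn : |⟪n₀, n⟫_ℝ - 1| ≤ 1 / 1000 := by
    have hsub := abs_real_inner_le_norm n₀ (n - n₀)
    rw [inner_sub_right, real_inner_self_eq_norm_sq, hh.norm_eq_one, one_pow, one_mul] at hsub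
    exact hsub.trans ha.norm_sub_le
  calc |h (P + t • n) - t|
      = |(h (P + t • n) - t * ⟪n₀, n⟫_ℝ) + t * (⟪n₀, n⟫_ℝ - 1)| := by ring_nf
    _ ≤ 1 / 1000 * t + t * (1 / 1000) := by
        refine (abs_add_le _ _).trans (add_le_add happrox ?_)
        rw [abs_mul, abs_of_nonneg ht0]
        gcongr
    _ = 2 / 1000 * t := by ring

namespace IsHeightFunction

lemma norm_sub_le (hh : IsHeightFunction D ξ R n₀ h) (hP : IsAscent D ξ R n₀ h P m α)
    (hQ : IsAscent D ξ R n₀ h Q n β) (hαH : α ≤ H) (hβH : β ≤ H) (hHR : 50 * H ≤ R)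
    (hHd : H ≤ 3 * ‖P + α • m - (Q + β • n)‖) :
    ‖Q + H • n - (P + H • m)‖ ≤ 1019 / 1000 * ‖P + α • m - (Q + β • n)‖ := by
  set u := P + α • m - (Q + β • n) with hu
  have hα := hP.pos
  have hβ := hQ.pos
  have hball : ball ξ (R / 2 + H) ⊆ ball ξ R := ball_subset_ball (by linarith)
  have hheight : |⟪n₀, u⟫_ℝ + (H - α - (H - β))| ≤ 1 / 1000 * ‖u‖ + 4 / 1000 * H := by
    have happrox := abs_le.1 <| hh.abs_sub_sub_inner_le
      (hball (hP.add_smul_mem_ball hα.le hαH)) (hball (hQ.add_smul_mem_ball hβ.le hβH))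
    have hhP := abs_le.1 (hP.abs_height_sub_le hh hα.le (by linarith))
    have hhQ := abs_le.1 (hQ.abs_height_sub_le hh hβ.le (by linarith))
    rw [← hu] at happrox
    rw [abs_le]
    constructor <;> linarith
  have hraise := norm_add_smul_sub_smul_le hh.norm_eq_one hP.norm_sub_le hQ.norm_sub_le
    (sub_nonneg.2 hαH) (sub_le_self H hα.le) (sub_nonneg.2 hβH) (sub_le_self H hβ.le) u
  have hdiff : P + H • m - (Q + H • n) = u + (H - α) • m - (H - β) • n := by
    rw [hu]
    module
  rw [norm_sub_rev, hdiff]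
  linarith

lemma kobJoined_add_smul [CompleteSpace E] (hh : IsHeightFunction D ξ R n₀ h)
    (hP : IsAscent D ξ R n₀ h P m α) (hQ : IsAscent D ξ R n₀ h Q n β) (hαH : α ≤ H)
    (hβH : β ≤ H) (hHR : 50 * H ≤ R) (hHd : H ≤ 3 * ‖P + α • m - (Q + β • n)‖)
    (hdH : 3 * ‖P + α • m - (Q + β • n)‖ ≤ 5 * H) :
    KobJoined D (P + H • m) (Q + H • n) (3 / 5 * (‖P + α • m - (Q + β • n)‖ / H)) := by
  set x := P + H • m
  set y := Q + H • n
  set d := ‖P + α • m - (Q + β • n)‖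
  have hH : 0 < H := hP.pos.trans_le hαH
  have hball : ball ξ (R / 2 + H) ⊆ ball ξ R := ball_subset_ball (by linarith)
  have hxy : ‖y - x‖ ≤ 1019 / 1000 * d := hh.norm_sub_le hP hQ hαH hβH hHR hHd
  have hx := hP.add_smul_mem_ball hH.le le_rfl
  have hy := hQ.add_smul_mem_ball hH.le le_rfl
  have hmem : ∀ t ∈ Icc (0 : ℝ) 1, x + t • (y - x) ∈ ball ξ (R / 2 + H) := fun t ht =>
    (convex_ball ξ _).add_smul_sub_mem hx hy ht
  have hheight : ∀ t ∈ Icc (0 : ℝ) 1, 99 / 100 * H ≤ h (x + t • (y - x)) := fun t ht => by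
    have hhx := neg_le_of_abs_le (hP.abs_height_sub_le hh hH.le (by linarith))
    have hhy := neg_le_of_abs_le (hQ.abs_height_sub_le hh hH.le (by linarith))
    have hmin := sub_half_mul_norm_le_of_approximatesLinearOn hh.approx (hball hx) (hball hy)
      (hball (hmem t ht)) (segment_eq_image' ℝ x y ▸ mem_image_of_mem _ ht)
      (m := 998 / 1000 * H) (by linarith) (by linarith)
    norm_num at hmin
    linarith
  have hmetric : ∀ t ∈ Icc (0 : ℝ) 1,
      kobMetric D (x + t • (y - x)) (y - x) ≤ 3 / 5 * (d / H) := by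
    intro t ht
    have hz : ball (x + t • (y - x)) (15 * H) ⊆ ball ξ R :=
      ball_subset_ball' (by linarith [mem_ball.1 (hmem t ht)])
    refine (hh.kobMetric_le hH hz (hheight t ht) _).trans ?_
    rw [← mul_div_assoc, div_le_div_iff₀ (by positivity) hH]
    nlinarith [mul_le_mul_of_nonneg_right hxy hH.le, norm_nonneg (y - x)]
  simpa using KobJoined.of_segment (B := fun _ => 3 / 5 * (d / H)) continuousOn_const
    (fun t ht => hh.mem_of_pos _ (hball (hmem t ht)) (by linarith [hheight t ht])) hmetric

end IsHeightFunction

end Crossing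

lemma add_three_fifths_mul_le_log_two_mul {y : ℝ} (h1 : 1 ≤ y) (h2 : y ≤ 5 / 3) :
    3 / 50 + 3 / 5 * y ≤ Real.log (2 * y) := by
  have hlog := Real.le_log_one_add_of_nonneg (show 0 ≤ 2 * y - 1 by linarith)
  rw [add_sub_cancel] at hlog
  refine le_trans ?_ hlog
  rw [le_div_iff₀ (by linarith)]
  nlinarith

lemma add_three_fifths_mul_le_log_one_add {y : ℝ} (h1 : 1 / 3 ≤ y) (h2 : y ≤ 1) :
    3 / 50 + 3 / 5 * y ≤ Real.log (1 + y) := by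
  refine le_trans ?_ (Real.le_log_one_add_of_nonneg (by linarith))
  rw [le_div_iff₀ (by linarith)]
  nlinarith

lemma div_sub_le_log_one_add {a b d : ℝ} (ha : 0 < a) (hab : a ≤ b) (hd : 0 ≤ d)
    (hdb : 3 * d ≤ b) : d / (b - d) ≤ Real.log (1 + 2 * d / √(a * b)) := by
  have hb : 0 < b := ha.trans_le hab
  have hsqrt : √(a * b) ≤ b := by
    rw [Real.sqrt_le_left hb.le]
    nlinarith
  calc d / (b - d) ≤ 2 * d / (d + b) := by
        rw [div_le_div_iff₀ (by linarith) (by linarith)]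
        nlinarith
    _ = 2 * (2 * d / b) / (2 * d / b + 2) := by field_simp
    _ ≤ Real.log (1 + 2 * d / b) := Real.le_log_one_add_of_nonneg (by positivity)
    _ ≤ Real.log (1 + 2 * d / √(a * b)) := by gcongr

lemma climb_cross_climb_le_log {a b d : ℝ} (ha : 0 < a) (hab : a ≤ b) (hbd : b ≤ a + d)
    (hb3 : b ≤ 3 * d) {H : ℝ} (hH : H = max b (3 / 5 * d)) :
    2⁻¹ * Real.log (H / a) + 3 / 100 + 3 / 5 * (d / H) + (2⁻¹ * Real.log (H / b) + 3 / 100) ≤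
      Real.log (1 + 2 * d / √(a * b)) := by
  have hb : 0 < b := ha.trans_le hab
  have hd : 0 < d := by linarith
  have hbH : b ≤ H := hH ▸ le_max_left _ _
  have hdH : 3 / 5 * d ≤ H := hH ▸ le_max_right _ _
  have hHpos : 0 < H := hb.trans_le hbH
  have hS : 0 < √(a * b) := Real.sqrt_pos.2 (mul_pos ha hb)
  have haS : a ≤ √(a * b) := Real.le_sqrt_of_sq_le (by nlinarith)
  have hlogS : Real.log √(a * b) = 2⁻¹ * (Real.log a + Real.log b) := by
    rw [Real.log_sqrt (by positivity), Real.log_mul ha.ne' hb.ne']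
    ring
  have hreduced : 3 / 50 + 3 / 5 * (d / H) ≤ Real.log ((√(a * b) + 2 * d) / H) := by
    rcases le_or_gt H d with hHd | hHd
    · refine (add_three_fifths_mul_le_log_two_mul ((one_le_div hHpos).2 hHd) ?_).trans ?_
      · rw [div_le_iff₀ hHpos]
        linarith
      · rw [← mul_div_assoc]
        gcongr
        linarith
    · have hHb : H = b := by
        rw [hH, max_eq_left_iff]
        by_contra! hlt
        rw [hH, max_eq_right hlt.le] at hHd
        linarith
      refine (add_three_fifths_mul_le_log_one_add ?_ ((div_le_one hHpos).2 hHd.le)).trans ?_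
      · rw [le_div_iff₀ hHpos]
        linarith
      · rw [one_add_div hHpos.ne']
        exact Real.log_le_log (by positivity)
          (div_le_div_of_nonneg_right (by linarith) hHpos.le)
  rw [Real.log_div (by positivity) hHpos.ne'] at hreduced
  rw [one_add_div hS.ne', Real.log_div (by positivity) hS.ne', hlogS,
    Real.log_div hHpos.ne' ha.ne', Real.log_div hHpos.ne' hb.ne']
  linarith

lemma kobJoined_of_ball_subset {E : Type*} [NormedAddCommGroup E] [NormedSpace ℂ E]
    [CompleteSpace E] {D : Set E} {p q : E} {r : ℝ} (hball : ball q r ⊆ D) (hr : ‖p - q‖ < r) :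
    KobJoined D p q (‖p - q‖ / (r - ‖p - q‖)) := by
  have hballs : ∀ t ∈ Icc (0 : ℝ) 1, ball (q + t • (p - q)) (r - ‖p - q‖) ⊆ D := fun t ht => by
    refine (ball_subset_ball' ?_).trans hball
    rw [dist_eq_norm, add_sub_cancel_left, norm_smul, Real.norm_of_nonneg ht.1]
    linarith [mul_le_of_le_one_left (norm_nonneg (p - q)) ht.2]
  have hpos := sub_pos.2 hr
  refine KobJoined.symm ?_
  simpa using KobJoined.of_segment (B := fun _ => ‖p - q‖ / (r - ‖p - q‖)) continuousOn_const
    (fun t ht => hballs t ht (mem_ball_self hpos))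
    (fun t ht => kobMetric_le_norm_div_of_ball_subset hpos (hballs t ht))

lemma IsHeightFunction.kobJoined_of_isAscent {E : Type*} [NormedAddCommGroup E]
    [InnerProductSpace ℂ E] [CompleteSpace E] {D : Set E} {ξ n₀ P Q m n : E} {R α β : ℝ} {h : E → ℝ}
    (hh : IsHeightFunction D ξ R n₀ h) (hP : IsAscent D ξ R n₀ h P m α)
    (hQ : IsAscent D ξ R n₀ h Q n β) {p q : E} (hp : p = P + α • m) (hq : q = Q + β • n)
    (hball : ball q β ⊆ D) (hαβ : α ≤ β) (hβα : β ≤ α + ‖p - q‖) (hβR : 50 * β ≤ R)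
    (hdR : 50 * ‖p - q‖ ≤ R) :
    KobJoined D p q (Real.log (1 + 2 * ‖p - q‖ / √(α * β))) := by
  have hα := hP.pos
  rcases le_or_gt (3 * ‖p - q‖) β with hd | hd
  · exact (kobJoined_of_ball_subset hball (by linarith [norm_nonneg (p - q)])).mono
      (div_sub_le_log_one_add hα hαβ (norm_nonneg _) hd)
  set H := max β (3 / 5 * ‖p - q‖) with hH
  have hβH : β ≤ H := le_max_left _ _
  have hHR : 50 * H ≤ R := by
    rw [hH, mul_max_of_nonneg _ _ (by norm_num)]
    exact max_le hβR (by linarith [norm_nonneg (p - q)])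
  have hHd : H ≤ 3 * ‖p - q‖ := max_le hd.le (by linarith [norm_nonneg (p - q)])
  have hdH : 3 * ‖p - q‖ ≤ 5 * H := by linarith [le_max_right β (3 / 5 * ‖p - q‖)]
  have hclimb := hP.kobJoined H (hαβ.trans hβH) hHR
  have hcross := hh.kobJoined_add_smul hP hQ (hαβ.trans hβH) hβH hHR (hp ▸ hq ▸ hHd)
    (hp ▸ hq ▸ hdH)
  have hdescend := (hQ.kobJoined H hβH hHR).symm
  rw [← hp] at hclimb
  rw [← hp, ← hq] at hcross
  rw [← hq] at hdescend
  exact ((hclimb.trans hcross).trans hdescend).mono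
    (climb_cross_climb_le_log hα hαβ hβα hd.le hH)

lemma exists_setIntegral_Ioc_le {f : ℝ → ℝ} {b ε : ℝ} (hb : 0 < b)
    (hf : IntegrableOn f (Ioc 0 b)) (hε : 0 < ε) :
    ∃ A ∈ Ioc 0 b, ∫ t in Ioc 0 A, f t ≤ ε := by
  have hcont := intervalIntegral.continuousOn_primitive
    ((integrableOn_Icc_iff_integrableOn_Ioc).2 hf)
  have hsmall : ∀ᶠ A in 𝓝[>] 0, ∫ t in Ioc 0 A, f t < ε := by
    have h0 := (hcont 0 (left_mem_Icc.2 hb.le)).eventually_lt_const (u := ε) (by simpa using hε)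
    exact nhdsWithin_Ioc_eq_nhdsGT hb ▸ nhdsWithin_mono 0 Ioc_subset_Icc_self h0
  obtain ⟨A, hA, hAb⟩ := (hsmall.and (Ioc_mem_nhdsGT hb)).exists
  exact ⟨A, hAb, hA.le⟩

section DiniSmooth

attribute [local instance] InnerProductSpace.complexToReal

variable {E : Type*} [NormedAddCommGroup E] [InnerProductSpace ℂ E]
  {D W : Set E} {ξ n₀ p q : E} {ρ h : E → ℝ} {R A : ℝ} {ω : ℝ → ℝ}

/-- The multiple of `-ρ` whose differential at `ξ` has norm `1`; when `ρ` defines `D` near `ξ` it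
serves as the height function there. -/
noncomputable def boundaryHeight (ρ : E → ℝ) (ξ x : E) : ℝ := -(‖fderiv ℝ ρ ξ‖⁻¹ * ρ x)

lemma IsHeightFunction.mono (hh : IsHeightFunction D ξ R n₀ h) {r : ℝ} (hr : r ≤ R) :
    IsHeightFunction D ξ r n₀ h where
  norm_eq_one := hh.norm_eq_one
  approx := hh.approx.mono_set (ball_subset_ball hr)
  mem_of_pos x hx := hh.mem_of_pos x (ball_subset_ball hr hx)

lemma IsLocalDefiningFn.exists_isHeightFunction [CompleteSpace E]
    (hρ : IsLocalDefiningFn D ξ W ρ) :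
    ∃ r > 0, ball ξ r ⊆ W ∧
      IsHeightFunction D ξ r (innerNormal ρ ξ) (boundaryHeight ρ ξ) := by
  have hξW : ξ ∈ W := hρ.2.1
  have hn := norm_innerNormal (hρ.fderiv_ne_zero hξW)
  have hderiv : HasStrictFDerivAt (boundaryHeight ρ ξ) (innerSL ℝ (innerNormal ρ ξ)) ξ := by
    have hinner : innerSL ℝ (innerNormal ρ ξ) = -(‖fderiv ℝ ρ ξ‖⁻¹ • fderiv ℝ ρ ξ) :=
      ContinuousLinearMap.ext (inner_innerNormal ρ ξ)
    rw [hinner]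
    exact ((hρ.hasStrictFDerivAt hξW).const_smul (‖fderiv ℝ ρ ξ‖⁻¹)).neg
  obtain ⟨s, hs, happrox⟩ :=
    hderiv.approximates_deriv_on_nhds (c := 1 / 1000) (Or.inr (by norm_num))
  obtain ⟨r, hr, hrs⟩ := Metric.mem_nhds_iff.1 (inter_mem hs (hρ.mem_nhds hξW))
  refine ⟨r, hr, fun x hx => (hrs hx).2, hn, happrox.mono_set fun x hx => (hrs hx).1,
    fun x hx hpos => (hρ.mem_iff (hrs hx).2).2 ?_⟩
  exact neg_of_mul_neg_right (neg_pos.1 hpos) (inv_nonneg.2 (norm_nonneg _))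

lemma IsLocalDefiningFn.exists_isAscent [ProperSpace E] (hρ : IsLocalDefiningFn D ξ W ρ)
    (hD : IsOpen D) (hξ : ξ ∈ frontier D) (hω : IsDiniModulus ω A)
    (hI : ∫ t in Ioc 0 A, ω t / t ≤ 1 / 2500)
    (hN : ∀ x ∈ frontier D ∩ W, ∀ y ∈ frontier D ∩ W, ‖x - y‖ ≤ A →
      ‖innerNormal ρ x - innerNormal ρ y‖ ≤ ω ‖x - y‖)
    (hRA : 8 * R ≤ A) (hW : ball ξ (5 * R) ⊆ W) (hp : p ∈ D)
    (hpξ : p ∈ ball ξ (R / 200)) :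
    ∃ P n, p = P + bdist D p • n ∧
      IsAscent D ξ R (innerNormal ρ ξ) (boundaryHeight ρ ξ) P n (bdist D p) := by
  have hR : 0 < R := by linarith [nonempty_ball.1 ⟨p, hpξ⟩]
  obtain ⟨P, hP, hpP⟩ := isClosed_frontier.exists_infDist_eq_dist ⟨ξ, hξ⟩ p
  have hpP' : bdist D p = ‖p - P‖ := hpP.trans (dist_eq_norm p P)
  have hpξ' : bdist D p ≤ dist p ξ := infDist_le_dist_of_mem hξ
  have hPξ : dist P ξ < R / 100 := by
    linarith [dist_triangle_left P ξ p, mem_ball.1 hpξ, hpP.symm.le.trans hpξ']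
  have hWP : ball P (4 * R) ⊆ W := (ball_subset_ball' (by linarith)).trans hW
  have hPW : P ∈ W := hWP (mem_ball_self (by positivity))
  have hξW : ξ ∈ W := hρ.2.1
  have hfoot := hρ.sub_eq_norm_smul_innerNormal hPW hP (hpP' ▸ ball_bdist_subset hD hp)
  have hnP := norm_innerNormal (hρ.fderiv_ne_zero hPW)
  have hclose : ‖innerNormal ρ P - innerNormal ρ ξ‖ ≤ 1 / 1000 := by
    rw [dist_eq_norm] at hPξ
    refine (hN P ⟨hP, hPW⟩ ξ ⟨hξ, hξW⟩ (by linarith)).trans ?_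
    have hmono : ω ‖P - ξ‖ ≤ ω R :=
      hω.monotoneOn ⟨norm_nonneg _, by linarith⟩ ⟨hR.le, by linarith⟩ (by linarith)
    linarith [hω.le_two_mul_integral hR (by linarith)]
  have hcone : ∀ w ∈ diniCone ω (innerNormal ρ P) (4 * R), P + w ∈ D := fun w hw =>
    hρ.add_mem_of_mem_diniCone (hω.mono (by linarith)).monotoneOn hP hWP (fun x hx =>
      hN x ⟨hx.1, hWP hx.2⟩ P ⟨hP, hPW⟩ (by linarith [mem_ball_iff_norm.1 hx.2])) hw
  have hpos : 0 < bdist D p := bdist_pos hD ⟨ξ, hξ⟩ hp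
  refine ⟨P, innerNormal ρ P, ?_, ?_, ?_, hnP, hclose, hpos, fun H hH hHR =>
    kobJoined_add_smul_of_diniCone hω hI hRA hnP hcone hpos hH hHR⟩
  · rw [hpP', ← hfoot, add_sub_cancel]
  · exact mem_ball.2 (by linarith)
  · rw [boundaryHeight, (hρ.mem_frontier_iff hPW).1 hP, mul_zero, neg_zero]

/-- The scale `R` and the height function around `ξ` that make every point of `D` close to `ξ`
the start of an ascent. -/
structure IsAscentChart (D : Set E) (ξ : E) (R : ℝ) (n₀ : E) (h : E → ℝ) : Prop
    extends IsHeightFunction D ξ R n₀ h where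
  exists_isAscent : ∀ p ∈ D ∩ ball ξ (R / 200),
    ∃ P n, p = P + bdist D p • n ∧ IsAscent D ξ R n₀ h P n (bdist D p)

lemma DiniSmoothBoundaryPoint.exists_isAscentChart [ProperSpace E] (hD : IsOpen D)
    (hξ : ξ ∈ frontier D) (hdini : DiniSmoothBoundaryPoint D ξ) :
    ∃ R > 0, ∃ n₀ h, IsAscentChart D ξ R n₀ h := by
  obtain ⟨W, ρ, ω, hρ, hω0, hωmono, hωint, hN⟩ := hdini
  obtain ⟨A, ⟨hA0, hA1⟩, hI⟩ := exists_setIntegral_Ioc_le (ε := 1 / 2500) one_pos hωint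
    (by norm_num)
  have hω : IsDiniModulus ω A := IsDiniModulus.mono ⟨hω0, hωmono, hωint⟩ hA1
  obtain ⟨r, hr, hrW, hheight⟩ := hρ.exists_isHeightFunction
  have hN' : ∀ x ∈ frontier D ∩ W, ∀ y ∈ frontier D ∩ W, ‖x - y‖ ≤ A →
      ‖innerNormal ρ x - innerNormal ρ y‖ ≤ ω ‖x - y‖ := fun x hx y hy hxy => by
    rw [norm_innerNormal_sub]
    exact hN x hx y hy (hxy.trans hA1)
  have hRA : 8 * (min A r / 8) ≤ A := by linarith [min_le_left A r]
  have hRr : 8 * (min A r / 8) ≤ r := by linarith [min_le_right A r]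
  have hR : 0 < min A r / 8 := by positivity
  exact ⟨min A r / 8, hR, _, _, hheight.mono (by linarith), fun p hp =>
    hρ.exists_isAscent hD hξ hω hI hN' hRA
      ((ball_subset_ball (by linarith)).trans hrW) hp.1 hp.2⟩

lemma IsAscentChart.kobJoined_log [CompleteSpace E] (hD : IsOpen D) (hξ : ξ ∈ frontier D)
    (hc : IsAscentChart D ξ R n₀ h) (hp : p ∈ D ∩ ball ξ (R / 200))
    (hq : q ∈ D ∩ ball ξ (R / 200)) (hpq : bdist D p ≤ bdist D q) :
    KobJoined D p q (Real.log (1 + 2 * ‖p - q‖ / √(bdist D p * bdist D q))) := by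
  obtain ⟨P, m, hpP, hP⟩ := hc.exists_isAscent p hp
  obtain ⟨Q, n, hqQ, hQ⟩ := hc.exists_isAscent q hq
  have hqξ : bdist D q ≤ dist q ξ := infDist_le_dist_of_mem hξ
  have hlip : bdist D q ≤ bdist D p + dist q p := infDist_le_infDist_add_dist
  have hdist := dist_triangle_right p q ξ
  rw [dist_comm, dist_eq_norm] at hlip
  rw [dist_eq_norm p q] at hdist
  have hpR := mem_ball.1 hp.2
  have hqR := mem_ball.1 hq.2
  exact hc.toIsHeightFunction.kobJoined_of_isAscent hP hQ hpP hqQ (ball_bdist_subset hD hq.1)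
    hpq hlip (by linarith) (by linarith)

end DiniSmooth

theorem statement_17_general {E : Type*} [NormedAddCommGroup E] [InnerProductSpace ℂ E]
    [ProperSpace E] {D : Set E} (hD : IsOpen D) {ξ : E} (hξ : ξ ∈ frontier D)
    (hdini : DiniSmoothBoundaryPoint D ξ) :
    ∃ U : Set E, IsOpen U ∧ ξ ∈ U ∧ ∀ p ∈ D ∩ U, ∀ q ∈ D ∩ U,
      kobDist D p q ≤ Real.log (1 + 2 * ‖p - q‖ / √(bdist D p * bdist D q)) := by
  obtain ⟨R, hR, n₀, h, hchart⟩ := hdini.exists_isAscentChart hD hξ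
  refine ⟨ball ξ (R / 200), isOpen_ball, mem_ball_self (by positivity), fun p hp q hq => ?_⟩
  rcases le_total (bdist D p) (bdist D q) with hpq | hqp
  · exact (hchart.kobJoined_log hD hξ hp hq hpq).kobDist_le
  · rw [norm_sub_rev, mul_comm (bdist D p)]
    exact (hchart.kobJoined_log hD hξ hq hp hqp).symm.kobDist_le

theorem statement_17 {n : ℕ}
    (Ω : Set (EuclideanSpace ℂ (Fin n)))
    (hΩo : IsOpen Ω) (hΩc : IsConnected Ω) (hΩb : Bornology.IsBounded Ω)
    (ξ : EuclideanSpace ℂ (Fin n)) (hξ : ξ ∈ frontier Ω)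
    (hdini : DiniSmoothBoundaryPoint Ω ξ) :
    ∃ U : Set (EuclideanSpace ℂ (Fin n)), IsOpen U ∧ ξ ∈ U ∧
      ∀ p ∈ Ω ∩ U, ∀ q ∈ Ω ∩ U,
        kobDist Ω p q ≤
          Real.log (1 + 2 * ‖p - q‖ / Real.sqrt (bdist Ω p * bdist Ω q)) :=
  statement_17_general hΩo hξ hdini
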